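/- arXiv:2109.08362 — 8 statements merged into one kernel-verified Lean document; each statement's English description precedes it below -/
import Mathlib

section
/- Let t ∈ (0, max f). Any point x₀ lying in the intersection of the closures of two distinct connected components of the interior U_t° of the upper level set U_t is a critical point of f, i.e., ∇f(x₀) = 0. -/
open Metric Set Filter Topology MeasureTheory

/-!
Suppose the derivative `f'` at `x₀` is nonzero. By strict differentiability, `f` increases from `z`
to `z + w` whenever both points are near `x₀` and `w` lies in the open cone `c * ‖w‖ < f' w`. Fix a
point `p` close to `x₀` with `p - x₀` in this cone. For every `x` close enough to `x₀`, `p - x` is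
still in the cone, so all the translations along the segment from `x` to `p` increase `f` near `x`.
They therefore carry a neighbourhood of `x` contained in an upper level set into that level set, and
the whole segment stays in its interior. Thus a single component, that of `p`, contains all the
points of the interior near `x₀`.
-/

lemma connectedComponentIn_eq_of_mem_closure {X : Type*} [TopologicalSpace X] {F : Set X}
    {p x₀ y : X}
    (hp : ∀ᶠ x in 𝓝 x₀, x ∈ F → p ∈ connectedComponentIn F x)
    (hy : x₀ ∈ closure (connectedComponentIn F y)) :
    connectedComponentIn F y = connectedComponentIn F p := by
  obtain ⟨x, hxy, hxp⟩ := ((mem_closure_iff_frequently.mp hy).and_eventually hp).exists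
  have hxF : x ∈ F := connectedComponentIn_subset F y hxy
  exact (connectedComponentIn_eq hxy).trans (connectedComponentIn_eq (hxp hxF))

lemma add_mem_interior_upperLevelSet {G α : Type*} [TopologicalSpace G] [AddGroup G]
    [SeparatelyContinuousAdd G] [Preorder α] {f : G → α} {t : α} {x w : G}
    (hw : ∀ᶠ z in 𝓝 x, f z ≤ f (z + w)) (hx : x ∈ interior {z | t ≤ f z}) :
    x + w ∈ interior {z | t ≤ f z} := by
  have hmap : map (· + w) (𝓝 x) = 𝓝 (x + w) := (Homeomorph.addRight w).map_nhds_eq x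
  rw [mem_interior_iff_mem_nhds, ← hmap, mem_map]
  filter_upwards [hw, mem_interior_iff_mem_nhds.mp hx] with z hzw hz
  exact le_trans hz hzw

lemma mem_connectedComponentIn_interior_upperLevelSet {E α : Type*} [AddCommGroup E]
    [Module ℝ E] [TopologicalSpace E] [IsTopologicalAddGroup E] [ContinuousSMul ℝ E] [Preorder α]
    {f : E → α} {t : α} {x p : E}
    (hmono : ∀ s ∈ Icc (0 : ℝ) 1, ∀ᶠ z in 𝓝 x, f z ≤ f (z + s • (p - x)))
    (hx : x ∈ interior {z | t ≤ f z}) :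
    p ∈ connectedComponentIn (interior {z | t ≤ f z}) x := by
  have hsegment : segment ℝ x p ⊆ interior {z | t ≤ f z} := by
    rw [segment_eq_image']
    rintro _ ⟨s, hs, rfl⟩
    exact add_mem_interior_upperLevelSet (hmono s hs) hx
  exact (convex_segment x p).isPreconnected.subset_connectedComponentIn
    (left_mem_segment ℝ x p) hsegment (right_mem_segment ℝ x p)

section NormedSpace

variable {E : Type*} [NormedAddCommGroup E] [NormedSpace ℝ E]
  {f : E → ℝ} {f' : E →L[ℝ] ℝ} {x₀ : E}

lemma exists_frequently_mul_norm_sub_lt (hf' : f' ≠ 0) (x₀ : E) :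
    ∃ c > 0, ∃ᶠ p in 𝓝 x₀, c * ‖p - x₀‖ < f' (p - x₀) := by
  obtain ⟨v, hv⟩ : ∃ v, 0 < f' v := by
    obtain ⟨u, hu⟩ := DFunLike.ne_iff.mp hf'
    exact ⟨f' u • u, by simpa using mul_self_pos.mpr hu⟩
  obtain ⟨c, hc, hcv⟩ : ∃ c > 0, ‖v‖ * c < f' v := exists_pos_mul_lt hv ‖v‖
  have htendsto : Tendsto (fun s : ℝ ↦ x₀ + s • v) (𝓝[>] 0) (𝓝 x₀) :=
    (Continuous.tendsto' (by fun_prop) 0 x₀ (by simp)).mono_left nhdsWithin_le_nhds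
  refine ⟨c, hc, htendsto.frequently (Eventually.frequently ?_)⟩
  filter_upwards [self_mem_nhdsWithin] with s (hs : 0 < s)
  calc c * ‖x₀ + s • v - x₀‖ = s * (‖v‖ * c) := by
        rw [add_sub_cancel_left, norm_smul_of_nonneg hs.le]; ring
    _ < s * f' v := by gcongr
    _ = f' (x₀ + s • v - x₀) := by simp

lemma eventually_le_of_mul_norm_sub_le (hf : HasStrictFDerivAt f f' x₀) {c : ℝ} (hc : 0 < c) :
    ∀ᶠ q : E × E in 𝓝 (x₀, x₀), c * ‖q.1 - q.2‖ ≤ f' (q.1 - q.2) → f q.2 ≤ f q.1 := by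
  filter_upwards [hf.isLittleO.def hc] with q hq hcone
  have herror : -(c * ‖q.1 - q.2‖) ≤ f q.1 - f q.2 - f' (q.1 - q.2) := (abs_le.mp hq).1
  linarith

lemma exists_eventually_le_add_smul_sub (hf : HasStrictFDerivAt f f' x₀) (hf' : f' ≠ 0) :
    ∃ p, ∀ᶠ x in 𝓝 x₀, ∀ s ∈ Icc (0 : ℝ) 1, ∀ᶠ z in 𝓝 x, f z ≤ f (z + s • (p - x)) := by
  obtain ⟨c, hc, hfreq⟩ := exists_frequently_mul_norm_sub_lt hf' x₀
  obtain ⟨r, hr, hmono⟩ :=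
    Metric.eventually_nhds_iff_ball.mp (eventually_le_of_mul_norm_sub_le hf hc)
  rw [← ball_prod_same] at hmono
  obtain ⟨p, hcone, hp⟩ := (hfreq.and_eventually (ball_mem_nhds x₀ hr)).exists
  have hcone_near : ∀ᶠ x in 𝓝 x₀, c * ‖p - x‖ < f' (p - x) :=
    ContinuousAt.eventually_lt (by fun_prop) (by fun_prop) hcone
  refine ⟨p, ?_⟩
  filter_upwards [hcone_near, ball_mem_nhds x₀ hr] with x hpx hx s hs
  have hend : x + s • (p - x) ∈ ball x₀ r :=
    (convex_ball x₀ r).add_smul_sub_mem hx hp hs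
  have hend_near : ∀ᶠ z in 𝓝 x, z + s • (p - x) ∈ ball x₀ r :=
    ContinuousAt.eventually_mem (by fun_prop) (isOpen_ball.mem_nhds hend)
  filter_upwards [isOpen_ball.mem_nhds hx, hend_near] with z hz hz_end
  refine hmono (z + s • (p - x), z) ⟨hz_end, hz⟩ ?_
  calc c * ‖z + s • (p - x) - z‖ = s * (c * ‖p - x‖) := by
        rw [add_sub_cancel_left, norm_smul_of_nonneg hs.1]; ring
    _ ≤ s * f' (p - x) := mul_le_mul_of_nonneg_left hpx.le hs.1
    _ = f' (z + s • (p - x) - z) := by simp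

theorem split_points_are_critical_general (hf : HasStrictFDerivAt f f' x₀) {t : ℝ} {y₁ y₂ : E}
    (hne : connectedComponentIn (interior {x | t ≤ f x}) y₁ ≠
      connectedComponentIn (interior {x | t ≤ f x}) y₂)
    (hy₁ : x₀ ∈ closure (connectedComponentIn (interior {x | t ≤ f x}) y₁))
    (hy₂ : x₀ ∈ closure (connectedComponentIn (interior {x | t ≤ f x}) y₂)) :
    f' = 0 := by
  by_contra hf'
  obtain ⟨p, hmono⟩ := exists_eventually_le_add_smul_sub hf hf'
  have hp : ∀ᶠ x in 𝓝 x₀, x ∈ interior {x | t ≤ f x} →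
      p ∈ connectedComponentIn (interior {x | t ≤ f x}) x :=
    hmono.mono fun _ ↦ mem_connectedComponentIn_interior_upperLevelSet
  exact hne ((connectedComponentIn_eq_of_mem_closure hp hy₁).trans
    (connectedComponentIn_eq_of_mem_closure hp hy₂).symm)

end NormedSpace

/-- Any point in the intersection of the closures of two distinct connected
components of the interior of the upper level set `U_t = {x | f x ≥ t}` is a critical
point of `f`. -/
theorem split_points_are_critical {d : ℕ} (f : EuclideanSpace ℝ (Fin d) → ℝ)
    (hf : ContDiff ℝ 2 f) (hf_nonneg : ∀ x, 0 ≤ f x) (hf_int : ∫ x, f x = 1)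
    (t : ℝ) (ht : 0 < t) (ht_max : ∃ z, t < f z)
    (C₁ C₂ : Set (EuclideanSpace ℝ (Fin d)))
    (hC₁ : ∃ y ∈ interior {x | t ≤ f x},
      C₁ = connectedComponentIn (interior {x | t ≤ f x}) y)
    (hC₂ : ∃ y ∈ interior {x | t ≤ f x},
      C₂ = connectedComponentIn (interior {x | t ≤ f x}) y)
    (hne : C₁ ≠ C₂)
    (x₀ : EuclideanSpace ℝ (Fin d))
    (hx₀ : x₀ ∈ closure C₁ ∩ closure C₂) :
    gradient f x₀ = 0 := by
  obtain ⟨y₁, -, rfl⟩ := hC₁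
  obtain ⟨y₂, -, rfl⟩ := hC₂
  have hstrict : HasStrictFDerivAt f (fderiv ℝ f x₀) x₀ :=
    hf.contDiffAt.hasStrictFDerivAt two_ne_zero
  rw [gradient, split_points_are_critical_general hstrict hne hx₀.1 hx₀.2, map_zero]
end

section
/- Suppose t ∈ (0, max f), the level set L_t is nonempty and compact, and there are no critical points of f on L_t (i.e., ∇f(x) ≠ 0 for all x ∈ L_t). Then for all sufficiently small η > 0, the metric projection P_{t,η} onto L_{t+η} is well-defined on L_t and its restriction to L_t is a homeomorphism from L_t onto L_{t+η}. -/
open Metric Set Filter Topology MeasureTheory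

/-!
A density with a compact level `L_t` has a bounded superlevel set, so for small `η` the slab between
`L_t` and `L_{t+η}` is compact and free of critical points. On it `f` is strictly monotone along
short normal segments, and the ball through `y ∈ L_{t+η}` centred at `y - s • ∇ f y` meets `L_{t+η}`
only at `y`. By Lagrange multipliers, `y ∈ L_{t+η}` is a nearest point to `x ∈ L_t` if and only if
`x = y - s • ∇ f y` for a small `s ≥ 0`. Following the normal down from `y` to the level `t`
therefore shows that being a nearest point is a one-to-one relation between all of `L_t` and all of
`L_{t+η}`; closed in a compact product, it is the graph of a homeomorphism.
-/

open scoped NNReal RealInnerProductSpace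

section Topology

theorem exists_homeomorph_of_isCompact_graph {X Y : Type*} [TopologicalSpace X]
    [TopologicalSpace Y] [T2Space X] [T2Space Y] {Γ : Set (X × Y)} (hΓ : IsCompact Γ)
    (hX : ∀ x, ∃! y, (x, y) ∈ Γ) (hY : ∀ y, ∃! x, (x, y) ∈ Γ) :
    ∃ h : X ≃ₜ Y, ∀ x, (x, h x) ∈ Γ := by
  have : CompactSpace Γ := isCompact_iff_compactSpace.1 hΓ
  have hfst : Function.Bijective fun p : Γ => p.1.1 := by
    refine ⟨?_, fun x => ?_⟩
    · rintro ⟨⟨x, y⟩, hy⟩ ⟨⟨_, y'⟩, hy'⟩ rfl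
      exact Subtype.ext (Prod.ext rfl ((hX x).unique hy hy'))
    · obtain ⟨y, hy, -⟩ := hX x
      exact ⟨⟨(x, y), hy⟩, rfl⟩
  have hsnd : Function.Bijective fun p : Γ => p.1.2 := by
    refine ⟨?_, fun y => ?_⟩
    · rintro ⟨⟨x, y⟩, hx⟩ ⟨⟨x', _⟩, hx'⟩ rfl
      exact Subtype.ext (Prod.ext ((hY y).unique hx hx') rfl)
    · obtain ⟨x, hx, -⟩ := hY y
      exact ⟨⟨(x, y), hx⟩, rfl⟩
  let toX : Γ ≃ₜ X := Continuous.homeoOfEquivCompactToT2 (f := Equiv.ofBijective _ hfst)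
    (by exact continuous_fst.comp continuous_subtype_val)
  let toY : Γ ≃ₜ Y := Continuous.homeoOfEquivCompactToT2 (f := Equiv.ofBijective _ hsnd)
    (by exact continuous_snd.comp continuous_subtype_val)
  refine ⟨toX.symm.trans toY, fun x => ?_⟩
  have hx : (toX.symm x).1.1 = x := toX.apply_symm_apply x
  exact (congrArg (·, (toX.symm x).1.2) hx) ▸ (toX.symm x).2

theorem exists_preimage_Icc_disjoint_of_isCompact {X : Type*} [TopologicalSpace X] {f : X → ℝ}
    (hf : Continuous f) {t ε : ℝ} (hε : 0 < ε) (hcomp : IsCompact (f ⁻¹' Icc t (t + ε)))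
    {Z : Set X} (hZ : IsClosed Z) (hZt : ∀ x ∈ Z, f x ≠ t) :
    ∃ δ ∈ Ioc 0 ε, Disjoint (f ⁻¹' Icc t (t + δ)) Z := by
  obtain ⟨b, htb, hb⟩ := (hcomp.inter_right hZ).exists_forall_le' hf.continuousOn (a := t)
    fun x hx => hx.1.1.lt_of_ne' (hZt x hx.2)
  refine ⟨min ε ((b - t) / 2), ⟨by grind, min_le_left _ _⟩, disjoint_left.2 fun x hx hxZ => ?_⟩
  have hδε : min ε ((b - t) / 2) ≤ ε := min_le_left _ _
  have hδb : min ε ((b - t) / 2) ≤ (b - t) / 2 := min_le_right _ _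
  have hbx : b ≤ f x := hb x ⟨⟨hx.1, hx.2.trans (by linarith)⟩, hxZ⟩
  linarith [hx.2]

theorem exists_mem_Icc_apply_add_smul_eq {V : Type*} [AddCommGroup V] [Module ℝ V]
    [TopologicalSpace V] [ContinuousAdd V] [ContinuousSMul ℝ V] {f : V → ℝ} (hf : Continuous f)
    {x v : V} {r b : ℝ} (hr : 0 ≤ r) (hb : b ∈ uIcc (f x) (f (x + r • v))) :
    ∃ s ∈ Icc 0 r, f (x + s • v) = b := by
  have hcont : Continuous fun s : ℝ => f (x + s • v) := by fun_prop
  rw [← uIcc_of_le hr]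
  exact intermediate_value_uIcc hcont.continuousOn (by simpa using hb)

end Topology

section Superlevel

variable {E : Type*} [NormedAddCommGroup E] [NormedSpace ℝ E] [FiniteDimensional ℝ E]
  [MeasurableSpace E] [BorelSpace E]

theorem addHaar_halfSpace_gt_eq_top (μ : Measure E) [μ.IsAddHaarMeasure] {φ : E →L[ℝ] ℝ}
    (hφ : φ ≠ 0) (a : ℝ) : μ {x | a < φ x} = ⊤ := by
  have hsurj : Function.Surjective (φ : E →ₗ[ℝ] ℝ) :=
    LinearMap.surjective (by exact_mod_cast hφ)
  obtain ⟨c, hc, hmap⟩ := (φ : E →ₗ[ℝ] ℝ).exists_map_addHaar_eq_smul_addHaar μ volume hsurj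
  calc μ {x | a < φ x} = μ.map (φ : E →ₗ[ℝ] ℝ) (Ioi a) :=
        (Measure.map_apply φ.measurable measurableSet_Ioi).symm
    _ = ⊤ := by rw [hmap, Measure.smul_apply, Real.volume_Ioi, smul_eq_mul, ENNReal.mul_top hc.ne']

/-- A point of the superlevel set outside a ball containing the level set lies in a half-space
missing the level set, which by connectedness is contained in the superlevel set; but half-spaces
have infinite measure, whereas the superlevel set has finite measure. -/
theorem isBounded_superlevel_of_integrable {μ : Measure E} [μ.IsAddHaarMeasure] {f : E → ℝ}
    (hf : Continuous f) (hint : Integrable f μ) {t : ℝ} (ht : 0 < t)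
    (hlevel : Bornology.IsBounded {x | f x = t}) : Bornology.IsBounded {x | t ≤ f x} := by
  obtain ⟨R, hRpos, hR⟩ := hlevel.exists_pos_norm_le
  refine isBounded_iff_forall_norm_le.2 ⟨R, fun p hp => ?_⟩
  by_contra! hRp
  obtain ⟨φ, hφ, hφp⟩ := exists_dual_vector ℝ p (hRpos.trans hRp).ne'
  have hpH : R < φ p := by simpa [hφp] using hRp
  have hlevelH : ∀ x, R < φ x → f x ≠ t := fun x hx hxt => by
    have : φ x ≤ ‖x‖ := (le_abs_self _).trans (by simpa [hφ] using φ.le_opNorm x)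
    linarith [hR x hxt]
  have hH : {x | R < φ x} ⊆ {x | t ≤ ‖f x‖} := by
    intro x hx
    by_contra hxt
    have hfx : f x ≤ t := (le_abs_self _).trans (not_le.1 hxt).le
    obtain ⟨z, hz, hzt⟩ := (convex_halfSpace_gt φ.isLinear R).isPreconnected.intermediate_value
      hx hpH hf.continuousOn ⟨hfx, hp⟩
    exact hlevelH z hz hzt
  have hφ0 : φ ≠ 0 := norm_ne_zero_iff.1 (by simp [hφ])
  exact ((measure_mono hH).trans_lt (hint.measure_norm_ge_lt_top ht)).ne
    (addHaar_halfSpace_gt_eq_top μ hφ0 R)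

end Superlevel

section Gradient

variable {E : Type*} [NormedAddCommGroup E] [InnerProductSpace ℝ E] [CompleteSpace E]
  {f : E → ℝ} {S : Set E} {K : ℝ≥0}

theorem locallyLipschitz_gradient (hf : ContDiff ℝ 2 f) : LocallyLipschitz (gradient f) :=
  (InnerProductSpace.toDual ℝ E).symm.lipschitz.locallyLipschitz.comp
    (hf.fderiv_right (m := 1) (by norm_num)).locallyLipschitz

theorem strictMonoOn_add_smul_gradient (hf : Differentiable ℝ f)
    (hlip : LipschitzOnWith K (gradient f) S) {y : E} (hy : gradient f y ≠ 0) {c : ℝ}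
    (hKc : K * c < 1) (hS : ∀ s ∈ Icc (-c) c, y + s • gradient f y ∈ S) :
    StrictMonoOn (fun s : ℝ => f (y + s • gradient f y)) (Icc (-c) c) := by
  set g := gradient f y
  have hderiv (s : ℝ) :
      HasDerivAt (fun s : ℝ => f (y + s • g)) ⟪gradient f (y + s • g), g⟫ s := by
    have hline : HasDerivAt (fun s : ℝ => y + s • g) g s := by
      simpa using ((hasDerivAt_id s).smul_const g).const_add y
    rw [inner_gradient_left]
    exact (hf (y + s • g)).hasFDerivAt.comp_hasDerivAt s hline
  refine strictMonoOn_of_deriv_pos (convex_Icc _ _)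
    (fun s _ => (hderiv s).continuousAt.continuousWithinAt) fun s hs => ?_
  rw [(hderiv s).deriv]
  replace hs := interior_subset hs
  have hsc : |s| ≤ c := abs_le.2 hs
  have hyS : y ∈ S := by simpa using hS 0 (by constructor <;> linarith [abs_nonneg s])
  have hgpos : 0 < ‖g‖ := norm_pos_iff.2 hy
  have hlip_s : ‖gradient f (y + s • g) - g‖ ≤ K * c * ‖g‖ :=
    calc ‖gradient f (y + s • g) - g‖ ≤ K * ‖s • g‖ := by
          simpa using hlip.norm_sub_le (hS s hs) hyS
      _ ≤ K * c * ‖g‖ := by rw [norm_smul, Real.norm_eq_abs, mul_assoc]; gcongr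
  have hcs := (abs_le.1 (abs_real_inner_le_norm (gradient f (y + s • g) - g) g)).1
  have hnear : ‖gradient f (y + s • g) - g‖ * ‖g‖ < ‖g‖ * ‖g‖ :=
    mul_lt_mul_of_pos_right (hlip_s.trans_lt (mul_lt_of_lt_one_left hgpos hKc)) hgpos
  rw [inner_sub_left, real_inner_self_eq_norm_mul_norm] at hcs
  linarith

theorem neg_mul_norm_sq_le_inner_gradient (hf : Differentiable ℝ f) (hS : Convex ℝ S)
    (hlip : LipschitzOnWith K (gradient f) S) {y z : E} (hy : y ∈ S) (hz : z ∈ S)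
    (hyz : f z = f y) : -(K * ‖z - y‖ ^ 2) ≤ ⟪gradient f y, z - y⟫ := by
  obtain ⟨w, hw, hmvt⟩ := domain_mvt (fun x _ => (hf x).hasFDerivAt.hasFDerivWithinAt) hS hy hz
  rw [hyz, sub_self, ← inner_gradient_left] at hmvt
  have hwS : w ∈ S := hS.segment_subset hy hz hw
  have hbound : ‖gradient f y - gradient f w‖ ≤ K * ‖z - y‖ :=
    calc ‖gradient f y - gradient f w‖ ≤ K * ‖w - y‖ := by
          simpa [norm_sub_rev w y] using hlip.norm_sub_le hy hwS
      _ ≤ K * ‖z - y‖ := by gcongr; exact norm_sub_le_of_mem_segment hw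
  have hcs := (abs_le.1 (abs_real_inner_le_norm (gradient f y - gradient f w) (z - y))).1
  have := mul_le_mul_of_nonneg_right hbound (norm_nonneg (z - y))
  rw [inner_sub_left] at hcs
  nlinarith

/-- The ball centred at `y - s • ∇ f y` through `y` is tangent to the level set at `y`, and for
small `s` its curvature exceeds that of the level set. -/
theorem eq_of_dist_sub_smul_gradient_le (hf : Differentiable ℝ f) (hS : Convex ℝ S)
    (hlip : LipschitzOnWith K (gradient f) S) {y z : E} (hy : y ∈ S) (hz : z ∈ S)
    (hyz : f z = f y) {s : ℝ} (hs : 0 ≤ s) (hKs : 2 * K * s < 1)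
    (hdist : dist (y - s • gradient f y) z ≤ dist (y - s • gradient f y) y) : z = y := by
  set g := gradient f y
  have hinner : -(K * ‖z - y‖ ^ 2) ≤ ⟪g, z - y⟫ :=
    neg_mul_norm_sq_le_inner_gradient hf hS hlip hy hz hyz
  have hnorm : ‖s • g + (z - y)‖ ^ 2 ≤ ‖s • g‖ ^ 2 := by
    have hcenter : z - (y - s • g) = s • g + (z - y) := by abel
    rw [dist_eq_norm', dist_eq_norm', hcenter, sub_sub_cancel] at hdist
    gcongr
  rw [norm_add_sq_real, real_inner_smul_left] at hnorm
  have hsq : (1 - 2 * K * s) * ‖z - y‖ ^ 2 ≤ 0 := by nlinarith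
  have hzero : ‖z - y‖ ^ 2 = 0 :=
    (nonpos_of_mul_nonpos_right hsq (by linarith)).antisymm (sq_nonneg _)
  exact sub_eq_zero.1 (norm_eq_zero.1 (pow_eq_zero_iff two_ne_zero |>.1 hzero))

theorem exists_sub_eq_smul_gradient_of_isLocalMinOn_dist {x y : E} (hf : ContDiffAt ℝ 1 f y)
    (hy : gradient f y ≠ 0) (hmin : IsLocalMinOn (dist x) {z | f z = f y} y) :
    ∃ a : ℝ, x - y = a • gradient f y := by
  have hextr : IsLocalExtrOn (fun z => ‖z - x‖ ^ 2) {z | f z = f y} y := by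
    refine .inl (hmin.mono fun z hz => ?_)
    rw [dist_eq_norm', dist_eq_norm'] at hz
    exact pow_le_pow_left₀ (norm_nonneg _) hz 2
  have hderiv : HasStrictFDerivAt (fun z => ‖z - x‖ ^ 2) (2 • innerSL ℝ (y - x)) y := by
    simpa using (hasStrictFDerivAt_norm_sq (y - x)).comp y ((hasStrictFDerivAt_id y).sub_const x)
  obtain ⟨a, b, hab, hsum⟩ := hextr.exists_multipliers_of_hasStrictFDerivAt_1d
    (hf.hasStrictFDerivAt one_ne_zero) hderiv
  have hgrad : a • gradient f y = (2 * b) • (x - y) := by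
    refine ext_inner_right ℝ fun v => ?_
    have := DFunLike.congr_fun hsum v
    simp only [add_apply, smul_apply, innerSL_apply_apply, ← inner_gradient_left, zero_apply,
      smul_eq_mul, nsmul_eq_mul, Nat.cast_ofNat, inner_sub_left] at this
    rw [real_inner_smul_left, real_inner_smul_left, inner_sub_left]
    linarith
  have hb : b ≠ 0 := by
    rintro rfl
    have ha : a = 0 := by simpa [hy] using hgrad
    exact hab (Prod.ext ha rfl)
  refine ⟨(2 * b)⁻¹ * a, ?_⟩
  rw [mul_smul, hgrad, inv_smul_smul₀ (by positivity)]

end Gradient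

/-- A tubular neighbourhood of the level sets of `f` contained in `A`: the normal segments
`y + s • ∇ f y`, `|s| ≤ c`, of points `y` of `A` stay in the convex set `S`, on which `∇ f` is
`K`-Lipschitz. Normals are parametrized by the gradient itself rather than by arc length, so the
bound `2 * K * c < 1` involves no lower bound on the gradient. -/
structure GradientTube {E : Type*} [NormedAddCommGroup E] [InnerProductSpace ℝ E] [CompleteSpace E]
    (f : E → ℝ) (A S : Set E) (K : ℝ≥0) (c : ℝ) : Prop where
  pos : 0 < c
  two_mul_mul_lt_one : 2 * K * c < 1
  convex : Convex ℝ S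
  lipschitzOnWith : LipschitzOnWith K (gradient f) S
  gradient_ne_zero : ∀ y ∈ A, gradient f y ≠ 0
  add_smul_gradient_mem : ∀ y ∈ A, ∀ s ∈ Icc (-c) c, y + s • gradient f y ∈ S

theorem exists_gradientTube {E : Type*} [NormedAddCommGroup E] [InnerProductSpace ℝ E]
    [FiniteDimensional ℝ E] {f : E → ℝ} (hlip : LocallyLipschitz (gradient f)) {A : Set E}
    (hA : IsCompact A) (hreg : ∀ y ∈ A, gradient f y ≠ 0) :
    ∃ S K c, GradientTube f A S K c := by
  have hcont := hlip.continuous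
  have hsweep : IsCompact ((fun p : E × ℝ => p.1 + p.2 • gradient f p.1) '' A ×ˢ Icc (-1) 1) :=
    (hA.prod isCompact_Icc).image (by fun_prop)
  obtain ⟨R, hR⟩ := hsweep.isBounded.subset_closedBall 0
  obtain ⟨K, hK⟩ :=
    (hlip.locallyLipschitzOn (s := closedBall 0 R)).exists_lipschitzOnWith_of_compact
      (isCompact_closedBall 0 R)
  have hpos : (0 : ℝ) < 2 * K + 1 := by positivity
  have hle : (2 * K + 1 : ℝ)⁻¹ ≤ 1 := inv_le_one_of_one_le₀ (by linarith [K.coe_nonneg])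
  refine ⟨closedBall 0 R, K, (2 * K + 1)⁻¹, by positivity, ?_, convex_closedBall 0 R, hK, hreg,
    fun y hy s hs => hR ⟨(y, s), ⟨hy, ?_, ?_⟩, rfl⟩⟩
  · rw [← div_eq_mul_inv, div_lt_one hpos]
    linarith
  · linarith [hs.1]
  · linarith [hs.2]

namespace GradientTube

variable {E : Type*} [NormedAddCommGroup E] [InnerProductSpace ℝ E] [CompleteSpace E]
  {f : E → ℝ} {A S : Set E} {K : ℝ≥0} {c : ℝ}

theorem subset (h : GradientTube f A S K c) : A ⊆ S := fun y hy => by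
  simpa using h.add_smul_gradient_mem y hy 0 ⟨neg_nonpos.2 h.pos.le, h.pos.le⟩

theorem strictMonoOn (h : GradientTube f A S K c) (hf : Differentiable ℝ f) {y : E} (hy : y ∈ A) :
    StrictMonoOn (fun s : ℝ => f (y + s • gradient f y)) (Icc (-c) c) := by
  have hKc : 0 ≤ K * c := mul_nonneg K.2 h.pos.le
  exact strictMonoOn_add_smul_gradient hf h.lipschitzOnWith (h.gradient_ne_zero y hy)
    (by linarith [h.two_mul_mul_lt_one, hKc]) (h.add_smul_gradient_mem y hy)

theorem eq_of_dist_le (h : GradientTube f A S K c) (hf : Differentiable ℝ f) {y z : E}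
    (hy : y ∈ A) (hz : z ∈ A) (hyz : f z = f y) {s : ℝ} (hs : s ∈ Icc 0 c)
    (hdist : dist (y - s • gradient f y) z ≤ dist (y - s • gradient f y) y) : z = y := by
  have hKs : 2 * K * s ≤ 2 * K * c := by gcongr; exact hs.2
  exact eq_of_dist_sub_smul_gradient_le hf h.convex h.lipschitzOnWith (h.subset hy) (h.subset hz)
    hyz hs.1 (hKs.trans_lt h.two_mul_mul_lt_one) hdist

theorem exists_forall_add_le (h : GradientTube f A S K c) (hf : Differentiable ℝ f)
    (hgrad : Continuous (gradient f)) (hA : IsCompact A) :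
    ∃ δ > 0, ∀ y ∈ A, f y + δ ≤ f (y + (c / 2) • gradient f y) ∧
      f (y - (c / 2) • gradient f y) + δ ≤ f y := by
  have hfc := hf.continuous
  have hc := h.pos
  obtain ⟨δ, hδ, hgain⟩ := hA.exists_forall_le' (a := 0)
    (f := fun y => min (f (y + (c / 2) • gradient f y) - f y)
      (f y - f (y - (c / 2) • gradient f y))) (by fun_prop) fun y hy => by
    have hmono := h.strictMonoOn hf hy
    have hup := hmono (a := 0) (b := c / 2) (by grind) (by grind) (by linarith)
    have hdown := hmono (a := -(c / 2)) (b := 0) (by grind) (by grind) (by linarith)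
    simp only [zero_smul, add_zero, neg_smul, ← sub_eq_add_neg] at hup hdown
    exact lt_min (sub_pos.2 hup) (sub_pos.2 hdown)
  refine ⟨δ, hδ, fun y hy => ?_⟩
  have := le_min_iff.1 (hgain y hy)
  constructor <;> linarith

theorem abs_le_of_sub_eq_smul_gradient (h : GradientTube f A S K c) {x y : E} (hx : x ∈ A)
    (hy : y ∈ A) {a : ℝ} (hxy : x - y = a • gradient f y)
    (hdist : dist x y ≤ c / 2 * ‖gradient f x‖) : |a| ≤ c := by
  have hgpos : 0 < ‖gradient f y‖ := norm_pos_iff.2 (h.gradient_ne_zero y hy)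
  have hnorm : ‖x - y‖ = |a| * ‖gradient f y‖ := by rw [hxy, norm_smul, Real.norm_eq_abs]
  have hgrad : ‖gradient f x‖ ≤ ‖gradient f y‖ + K * ‖x - y‖ := by
    have hlip := h.lipschitzOnWith.norm_sub_le (h.subset hx) (h.subset hy)
    linarith [norm_le_norm_add_norm_sub' (gradient f x) (gradient f y)]
  have hc := h.pos
  have habs : |a| * ‖gradient f y‖ ≤ c / 2 * (1 + K * |a|) * ‖gradient f y‖ :=
    calc |a| * ‖gradient f y‖ ≤ c / 2 * ‖gradient f x‖ := by rwa [← hnorm, ← dist_eq_norm]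
      _ ≤ c / 2 * (‖gradient f y‖ + K * ‖x - y‖) := by gcongr
      _ = c / 2 * (1 + K * |a|) * ‖gradient f y‖ := by rw [hnorm]; ring
  have := le_of_mul_le_mul_right habs hgpos
  nlinarith [abs_nonneg a, h.two_mul_mul_lt_one]

theorem exists_eq_sub_smul_gradient_of_dist_eq_infDist (h : GradientTube f A S K c)
    (hf : ContDiff ℝ 1 f) {x y : E} (hx : x ∈ A) (hy : y ∈ A) (hxy : f x < f y)
    (hup : f y ≤ f (x + (c / 2) • gradient f x))
    (hdist : dist x y = infDist x {z | f z = f y}) :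
    ∃ s ∈ Icc 0 c, x = y - s • gradient f y := by
  have hmin : ∀ z, f z = f y → dist x y ≤ dist x z := fun z hz =>
    hdist.trans_le (infDist_le_dist_of_mem hz)
  obtain ⟨a, ha⟩ := exists_sub_eq_smul_gradient_of_isLocalMinOn_dist hf.contDiffAt
    (h.gradient_ne_zero y hy) (IsMinOn.localize hmin)
  have hxa : x = y + a • gradient f y := by rw [← ha, add_sub_cancel]
  have hac : |a| ≤ c := by
    obtain ⟨s, hs, hfs⟩ := exists_mem_Icc_apply_add_smul_eq hf.continuous
      (half_pos h.pos).le (mem_uIcc_of_le hxy.le hup)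
    refine h.abs_le_of_sub_eq_smul_gradient hx hy ha ((hmin _ hfs).trans ?_)
    rw [dist_self_add_right, norm_smul, Real.norm_of_nonneg hs.1]
    gcongr
    exact hs.2
  have ha0 : a < 0 := by
    have hc := h.pos
    refine ((h.strictMonoOn (hf.differentiable one_ne_zero) hy).lt_iff_lt (abs_le.1 hac)
      (by grind)).1 ?_
    simpa [← hxa] using hxy
  exact ⟨-a, ⟨by linarith, (neg_le_abs a).trans hac⟩, by rw [hxa, neg_smul, sub_neg_eq_add]⟩

theorem dist_sub_smul_gradient_eq_infDist [ProperSpace E] (h : GradientTube f A S K c)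
    (hf : Differentiable ℝ f) {y : E} (hy : y ∈ A) (hlevel : {z | f z = f y} ⊆ A) {s : ℝ}
    (hs : s ∈ Icc 0 c) : dist (y - s • gradient f y) y =
      infDist (y - s • gradient f y) {z | f z = f y} := by
  obtain ⟨z, hz, hdist⟩ := (isClosed_eq hf.continuous continuous_const).exists_infDist_eq_dist
    ⟨y, rfl⟩ (y - s • gradient f y)
  have hle := hdist ▸ infDist_le_dist_of_mem (show y ∈ {z | f z = f y} from rfl)
  rw [hdist, h.eq_of_dist_le hf hy (hlevel hz) hz hs hle]

section Levels

variable [ProperSpace E] {a b : ℝ}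

theorem existsUnique_nearest (h : GradientTube f A S K c) (hf : ContDiff ℝ 1 f) (hab : a < b)
    (hb : {y | f y = b} ⊆ A) {x : E} (hxA : x ∈ A) (hx : f x = a)
    (hup : b ≤ f (x + (c / 2) • gradient f x)) :
    ∃! y, f y = b ∧ dist x y = infDist x {z | f z = b} := by
  obtain ⟨s, -, hs⟩ := exists_mem_Icc_apply_add_smul_eq hf.continuous
    (half_pos h.pos).le (mem_uIcc_of_le (hx.trans_le hab.le) hup)
  obtain ⟨y, rfl, hxy⟩ :=
    (isClosed_eq hf.continuous continuous_const).exists_infDist_eq_dist ⟨_, hs⟩ x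
  obtain ⟨r, hr, rfl⟩ := h.exists_eq_sub_smul_gradient_of_dist_eq_infDist hf hxA (hb rfl)
    (hx.trans_lt hab) hup hxy.symm
  exact ⟨y, ⟨rfl, hxy.symm⟩, fun z hz => h.eq_of_dist_le (hf.differentiable one_ne_zero) (hb rfl)
    (hb hz.1) hz.1 hr (hz.2.trans hxy).le⟩

theorem existsUnique_of_nearest (h : GradientTube f A S K c) (hf : ContDiff ℝ 1 f) (hab : a < b)
    (ha : {x | f x = a} ⊆ A) (hb : {y | f y = b} ⊆ A)
    (hup : ∀ x, f x = a → b ≤ f (x + (c / 2) • gradient f x)) {y : E} (hy : f y = b)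
    (hdown : f (y - (c / 2) • gradient f y) ≤ a) :
    ∃! x, f x = a ∧ dist x y = infDist x {z | f z = b} := by
  subst hy
  have hc := h.pos
  obtain ⟨s, hs, hfs⟩ := exists_mem_Icc_apply_add_smul_eq hf.continuous (half_pos hc).le
    (v := -gradient f y) (mem_uIcc_of_ge (by rwa [smul_neg, ← sub_eq_add_neg]) hab.le)
  rw [smul_neg, ← sub_eq_add_neg] at hfs
  refine ⟨y - s • gradient f y, ⟨hfs, h.dist_sub_smul_gradient_eq_infDist
    (hf.differentiable one_ne_zero) (hb rfl) hb ⟨hs.1, by linarith [hs.2]⟩⟩, fun x ⟨hx, hxy⟩ => ?_⟩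
  obtain ⟨r, hr, rfl⟩ := h.exists_eq_sub_smul_gradient_of_dist_eq_infDist hf (ha hx) (hb rfl)
    (hx.trans_lt hab) (hup x hx) hxy
  have hrs : -r = -s := (h.strictMonoOn (hf.differentiable one_ne_zero) (hb rfl)).injOn
    (by grind) (by grind) (by simpa [← sub_eq_add_neg] using hx.trans hfs.symm)
  rw [neg_inj.1 hrs]

theorem exists_homeomorph_nearest (h : GradientTube f A S K c) (hf : ContDiff ℝ 1 f)
    (hA : IsCompact A) (hab : a < b) (ha : {x | f x = a} ⊆ A) (hb : {y | f y = b} ⊆ A)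
    (hup : ∀ x, f x = a → b ≤ f (x + (c / 2) • gradient f x))
    (hdown : ∀ y, f y = b → f (y - (c / 2) • gradient f y) ≤ a) :
    ∃ e : {x | f x = a} ≃ₜ {y | f y = b},
      ∀ x : {x | f x = a}, dist (x : E) (e x : E) = infDist (x : E) {z | f z = b} := by
  have hcompact {r : ℝ} (hr : {x | f x = r} ⊆ A) : CompactSpace {x | f x = r} :=
    isCompact_iff_compactSpace.1
      (hA.of_isClosed_subset (isClosed_eq hf.continuous continuous_const) hr)
  have := hcompact ha
  have := hcompact hb
  have hclosed : IsClosed {p : {x | f x = a} × {y | f y = b} |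
      dist (p.1 : E) (p.2 : E) = infDist (p.1 : E) {z | f z = b}} :=
    isClosed_eq (by fun_prop)
      ((continuous_infDist_pt _).comp (continuous_subtype_val.comp continuous_fst))
  refine exists_homeomorph_of_isCompact_graph hclosed.isCompact (fun x => ?_) fun y => ?_
  · obtain ⟨y, ⟨hy, hxy⟩, huniq⟩ := h.existsUnique_nearest hf hab hb (ha x.2) x.2 (hup x x.2)
    exact ⟨⟨y, hy⟩, hxy, fun z hz => Subtype.ext (huniq z ⟨z.2, hz⟩)⟩
  · obtain ⟨x, ⟨hx, hxy⟩, huniq⟩ := h.existsUnique_of_nearest hf hab ha hb hup y.2 (hdown y y.2)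
    exact ⟨⟨x, hx⟩, hxy, fun z hz => Subtype.ext (huniq z ⟨z.2, hz⟩)⟩

end Levels

end GradientTube

theorem projection_is_homeomorphism_general {E : Type*} [NormedAddCommGroup E]
    [InnerProductSpace ℝ E] [FiniteDimensional ℝ E] {f : E → ℝ} (hf : ContDiff ℝ 1 f)
    (hgrad : LocallyLipschitz (gradient f)) {t ε : ℝ} (hε : 0 < ε)
    (hbdd : Bornology.IsBounded (f ⁻¹' Icc t (t + ε))) (hreg : ∀ x, f x = t → gradient f x ≠ 0) :
    ∃ η₀ > 0, ∀ η : ℝ, 0 < η → η < η₀ →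
      (∀ x ∈ {x | f x = t},
        ∃! y, y ∈ {z | f z = t + η} ∧ dist x y = infDist x {z | f z = t + η}) ∧
      ∃ h : {x | f x = t} ≃ₜ {z | f z = t + η},
        ∀ x : {x | f x = t}, dist (x : E) (h x : E) = infDist (x : E) {z | f z = t + η} := by
  have hslab (r : ℝ) : IsClosed (f ⁻¹' Icc t (t + r)) := isClosed_Icc.preimage hf.continuous
  obtain ⟨δ, ⟨hδ, hδε⟩, hdisj⟩ := exists_preimage_Icc_disjoint_of_isCompact hf.continuous hε
    (isCompact_of_isClosed_isBounded (hslab ε) hbdd)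
    (isClosed_eq hgrad.continuous continuous_const) fun x hx hxt => hreg x hxt hx
  have hA : IsCompact (f ⁻¹' Icc t (t + δ)) := isCompact_of_isClosed_isBounded (hslab δ)
    (hbdd.subset (preimage_mono (Icc_subset_Icc_right (by linarith))))
  obtain ⟨S, K, c, h⟩ := exists_gradientTube hgrad hA fun y hy => disjoint_left.1 hdisj hy
  obtain ⟨γ, hγ, hgain⟩ :=
    h.exists_forall_add_le (hf.differentiable one_ne_zero) hgrad.continuous hA
  refine ⟨min δ γ, lt_min hδ hγ, fun η hη hηlt => ?_⟩
  obtain ⟨hηδ, hηγ⟩ := lt_min_iff.1 hηlt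
  have hlower : {x | f x = t} ⊆ f ⁻¹' Icc t (t + δ) := fun x (hx : f x = t) => by grind
  have hupper : {y | f y = t + η} ⊆ f ⁻¹' Icc t (t + δ) := fun y (hy : f y = t + η) => by grind
  have hup (x : E) (hx : f x = t) : t + η ≤ f (x + (c / 2) • gradient f x) := by
    linarith [(hgain x (hlower hx)).1]
  have hdown (y : E) (hy : f y = t + η) : f (y - (c / 2) • gradient f y) ≤ t := by
    linarith [(hgain y (hupper hy)).2]
  have hlt : t < t + η := lt_add_of_pos_right t hη
  exact ⟨fun x hx => h.existsUnique_nearest hf hlt hupper (hlower hx) hx (hup x hx),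
    h.exists_homeomorph_nearest hf hA hlt hlower hupper hup hdown⟩

/-- If `L_t` is nonempty, compact, and free of critical points, then for all
sufficiently small `η > 0` the metric projection onto `L_{t+η}` is well-defined on `L_t`
(each point of `L_t` has a unique nearest point in `L_{t+η}`) and its restriction to `L_t`
is a homeomorphism from `L_t` onto `L_{t+η}`. -/
theorem projection_is_homeomorphism {d : ℕ} (f : EuclideanSpace ℝ (Fin d) → ℝ)
    (hf : ContDiff ℝ 2 f) (hf_nonneg : ∀ x, 0 ≤ f x) (hf_int : ∫ x, f x = 1)
    (t : ℝ) (ht : 0 < t) (ht_max : ∃ z, t < f z)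
    (hne : {x : EuclideanSpace ℝ (Fin d) | f x = t}.Nonempty)
    (hcomp : IsCompact {x : EuclideanSpace ℝ (Fin d) | f x = t})
    (hreg : ∀ x, f x = t → gradient f x ≠ 0) :
    ∃ η₀ > 0, ∀ η : ℝ, 0 < η → η < η₀ →
      (∀ x ∈ {x : EuclideanSpace ℝ (Fin d) | f x = t},
        ∃! y, y ∈ {z : EuclideanSpace ℝ (Fin d) | f z = t + η} ∧
          dist x y = Metric.infDist x {z : EuclideanSpace ℝ (Fin d) | f z = t + η}) ∧
      ∃ h : {x : EuclideanSpace ℝ (Fin d) | f x = t} ≃ₜ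
            {z : EuclideanSpace ℝ (Fin d) | f z = t + η},
        ∀ x : {x : EuclideanSpace ℝ (Fin d) | f x = t},
          dist (x : EuclideanSpace ℝ (Fin d)) (h x : EuclideanSpace ℝ (Fin d)) =
            Metric.infDist (x : EuclideanSpace ℝ (Fin d))
              {z : EuclideanSpace ℝ (Fin d) | f z = t + η} := by
  have hbdd : Bornology.IsBounded {x | t ≤ f x} := isBounded_superlevel_of_integrable hf.continuous
    (integrable_of_integral_eq_one hf_int) ht hcomp.isBounded
  exact projection_is_homeomorphism_general (hf.of_le one_le_two) (locallyLipschitz_gradient hf)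
    one_pos (hbdd.subset fun _ hx => hx.1) hreg
end

section
/- Let t ∈ (0, max f) and let x ∈ L_t be such that ∇f(x) ≠ 0. Then for all sufficiently small η > 0, the metric projection of x onto L_{t+η} is a singleton, i.e., x has a unique nearest point in L_{t+η}. -/
open Metric Set Filter Topology MeasureTheory

/-!
A nearest point `y` of a level set to `x` satisfies the Lagrange condition `y - s • ∇ f y = x`.
Conversely, the map `(y, s) ↦ (y - s • ∇ f y, f y)` has a surjective strict derivative at `(x, 0)`
when `∇ f x ≠ 0`, hence is open there: for `c` close to `f x` some `(y, s)` close to `(x, 0)`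
satisfies this condition with `f y = c`. The first-order condition is then sufficient: the
level set deviates only quadratically from its tangent hyperplane at `y`, while the sphere around
`x` through `y` has the small radius `|s| * ‖∇ f y‖`, hence large curvature, so it touches the
level set at `y` alone.
-/

open scoped Gradient RealInnerProductSpace

lemma existsUnique_dist_eq_infDist {α : Type*} [PseudoMetricSpace α] {A : Set α} {x y : α}
    (hy : y ∈ A) (h : ∀ z ∈ A, z ≠ y → dist x y < dist x z) :
    ∃! z, z ∈ A ∧ dist x z = infDist x A := by
  have hyA : dist x y = infDist x A := by
    refine le_antisymm ((le_infDist ⟨y, hy⟩).2 fun z hz => ?_) (infDist_le_dist_of_mem hy)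
    rcases eq_or_ne z y with rfl | hzy
    exacts [le_rfl, (h z hz hzy).le]
  refine ⟨y, ⟨hy, hyA⟩, fun z ⟨hz, hzA⟩ => ?_⟩
  by_contra hzy
  exact (h z hz hzy).ne (hyA.trans hzA.symm)

lemma isBigO_sub_sub_fderiv {E F : Type*} [NormedAddCommGroup E] [NormedSpace ℝ E]
    [NormedAddCommGroup F] [NormedSpace ℝ F] {f : E → F} {x : E} (hf : ContDiffAt ℝ 2 f x) :
    (fun p : E × E => f p.2 - f p.1 - fderiv ℝ f p.1 (p.2 - p.1))
      =O[𝓝 (x, x)] fun p => ‖p.2 - p.1‖ ^ 2 := by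
  have hf' : ContDiffAt ℝ 1 (fderiv ℝ f) x := hf.fderiv_right (by norm_num)
  obtain ⟨K, T, hT, hK⟩ := hf'.exists_lipschitzOnWith
  have hdiff : ∀ᶠ y in 𝓝 x, DifferentiableAt ℝ f y :=
    (hf.eventually (by simp)).mono fun y hy => hy.differentiableAt (by norm_num)
  obtain ⟨r, hr, hball⟩ := eventually_nhds_iff_ball.1 (hdiff.and hT)
  refine .of_bound K ?_
  rw [nhds_prod_eq, eventually_prod_self_iff']
  refine ⟨ball x r, ball_mem_nhds x hr, fun y hy z hz => ?_⟩
  have hsegment : segment ℝ y z ⊆ ball x r := (convex_ball x r).segment_subset hy hz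
  have hderiv : ∀ w ∈ segment ℝ y z, ‖fderiv ℝ f w - fderiv ℝ f y‖ ≤ K * ‖z - y‖ := fun w hw =>
    (hK.norm_sub_le (hball w (hsegment hw)).2 (hball y hy).2).trans <| by
      gcongr
      exact norm_sub_le_of_mem_segment hw
  have htaylor := (convex_segment y z).norm_image_sub_le_of_norm_fderiv_le'
    (fun w hw => (hball w (hsegment hw)).1) hderiv (left_mem_segment ℝ y z)
    (right_mem_segment ℝ y z)
  simpa [sq, mul_assoc] using htaylor

section InnerProductSpace

variable {E : Type*} [NormedAddCommGroup E] [InnerProductSpace ℝ E]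

lemma dist_lt_dist_of_abs_inner_le {x y z g : E} {s K : ℝ} (hx : y - s • g = x)
    (hg : |⟪g, z - y⟫| ≤ K * ‖z - y‖ ^ 2) (hs : 2 * (|s| * K) < 1) (hzy : z ≠ y) :
    dist x y < dist x z := by
  have hzy' : 0 < ‖z - y‖ ^ 2 := by
    have := sub_ne_zero.2 hzy
    positivity
  have hexpand : ‖z - x‖ ^ 2 = ‖z - y‖ ^ 2 + 2 * (s * ⟪g, z - y⟫) + ‖y - x‖ ^ 2 := by
    have hyx : y - x = s • g := by rw [← hx, sub_sub_cancel]
    rw [← sub_add_sub_cancel z y x, norm_add_sq_real, hyx, real_inner_smul_right,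
      real_inner_comm]
  have hcross : |s * ⟪g, z - y⟫| ≤ |s| * K * ‖z - y‖ ^ 2 := by
    rw [abs_mul, mul_assoc]
    gcongr
  rw [dist_comm x, dist_comm x, dist_eq_norm, dist_eq_norm]
  refine lt_of_pow_lt_pow_left₀ 2 (norm_nonneg _) ?_
  linarith [neg_le_of_abs_le hcross, mul_lt_of_lt_one_left hzy' hs]

/-- The derivative of `normalMap f` at `(x, 0)`, where `g` stands for `∇ f x`. -/
noncomputable def normalMapDeriv (g : E) : E × ℝ →L[ℝ] E × ℝ :=
  (.fst ℝ E ℝ - (ContinuousLinearMap.snd ℝ E ℝ).smulRight g).prod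
    ((innerSL ℝ g).comp (.fst ℝ E ℝ))

lemma range_normalMapDeriv {g : E} (hg : g ≠ 0) : (normalMapDeriv g).range = ⊤ := by
  refine LinearMap.range_eq_top.2 fun ⟨w, a⟩ => ?_
  set s := (a - ⟪g, w⟫) / ‖g‖ ^ 2
  have hs : s * ‖g‖ ^ 2 = a - ⟪g, w⟫ := div_mul_cancel₀ _ (by positivity)
  refine ⟨(w + s • g, s), ?_⟩
  simp [normalMapDeriv, inner_add_right, real_inner_smul_right, hs]

variable [CompleteSpace E] {f : E → ℝ} {x : E}

lemma contDiffAt_gradient {n : WithTop ℕ∞} (hf : ContDiffAt ℝ (n + 1) f x) :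
    ContDiffAt ℝ n (∇ f) x :=
  (InnerProductSpace.toDual ℝ E).symm.contDiff.contDiffAt.comp x (hf.fderiv_right le_rfl)

/-- Moves a point `y` along the normal of its level set by `-s • ∇ f y` and records its level;
at a regular value `c` of `f`, the fibre over `(x, c)` consists of the critical points of the
squared distance to `x` on the level set of `c`, paired with their Lagrange multipliers `s`. -/
noncomputable def normalMap (f : E → ℝ) (p : E × ℝ) : E × ℝ :=
  (p.1 - p.2 • ∇ f p.1, f p.1)

lemma hasStrictFDerivAt_normalMap (hf : ContDiffAt ℝ 2 f x) :
    HasStrictFDerivAt (normalMap f) (normalMapDeriv (∇ f x)) (x, 0) := by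
  have hfst : HasStrictFDerivAt Prod.fst (.fst ℝ E ℝ) (x, (0 : ℝ)) := hasStrictFDerivAt_fst
  have hsnd : HasStrictFDerivAt Prod.snd (.snd ℝ E ℝ) (x, (0 : ℝ)) := hasStrictFDerivAt_snd
  have hgrad : HasStrictFDerivAt (∇ f) (fderiv ℝ (∇ f) x) x :=
    (contDiffAt_gradient (n := 1) (by simpa [one_add_one_eq_two] using hf)).hasStrictFDerivAt
      (by norm_num)
  have hlevel : HasStrictFDerivAt f (fderiv ℝ f x) x := hf.hasStrictFDerivAt (by norm_num)
  convert! (hfst.sub (hsnd.smul (hgrad.comp (x, (0 : ℝ)) hfst))).prodMk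
    (hlevel.comp (x, (0 : ℝ)) hfst) using 1
  ext <;> simp [normalMapDeriv, inner_gradient_left]

lemma map_normalMap_nhds (hf : ContDiffAt ℝ 2 f x) (hgx : ∇ f x ≠ 0) :
    map (normalMap f) (𝓝 (x, 0)) = 𝓝 (x, f x) := by
  simpa [normalMap] using
    (hasStrictFDerivAt_normalMap hf).map_nhds_eq_of_surj (range_normalMapDeriv hgx)

lemma eventually_forall_dist_lt_of_normalMap (hf : ContDiffAt ℝ 2 f x) :
    ∀ᶠ p in 𝓝 (x, (0 : ℝ)), (normalMap f p).1 = x →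
      ∀ z, f z = f p.1 → z ≠ p.1 → dist x p.1 < dist x z := by
  obtain ⟨K, hK⟩ := (isBigO_sub_sub_fderiv hf).bound
  rw [nhds_prod_eq, eventually_prod_self_iff'] at hK
  obtain ⟨U, hU, hK⟩ := hK
  obtain ⟨r, hr, hrU⟩ := Metric.mem_nhds_iff.1 hU
  have hnear : ∀ᶠ p : E × ℝ in 𝓝 (x, 0), p.1 ∈ ball x r :=
    continuous_fst.continuousAt.eventually_mem (ball_mem_nhds x hr)
  have hsmall : ∀ᶠ p : E × ℝ in 𝓝 (x, 0), 2 * (|p.2| * K) < 1 :=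
    ContinuousAt.eventually_lt (by fun_prop) continuousAt_const (by simp)
  filter_upwards [hnear, hsmall] with ⟨y, s⟩ hy hs hyx z hzy hne
  by_cases hz : z ∈ ball x r
  · have htangent : |⟪∇ f y, z - y⟫| ≤ K * ‖z - y‖ ^ 2 := by
      simpa [hzy, inner_gradient_left, abs_sub_comm] using hK y (hrU hy) z (hrU hz)
    exact dist_lt_dist_of_abs_inner_le hyx htangent hs hne
  · exact (mem_ball'.1 hy).trans_le (not_lt.1 (mt mem_ball'.2 hz))

theorem projection_singleton_general (hf : ContDiffAt ℝ 2 f x) (hgx : ∇ f x ≠ 0) :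
    ∀ᶠ c in 𝓝 (f x), ∃! y, y ∈ {z | f z = c} ∧ dist x y = infDist x {z | f z = c} := by
  have hsolve : ∀ᶠ q in 𝓝 (x, f x), ∃ p, normalMap f p = q ∧
      ((normalMap f p).1 = x → ∀ z, f z = f p.1 → z ≠ p.1 → dist x p.1 < dist x z) := by
    rw [← map_normalMap_nhds hf hgx, eventually_map]
    exact (eventually_forall_dist_lt_of_normalMap hf).mono fun p hp => ⟨p, rfl, hp⟩
  have hlevel : Tendsto (fun c => (x, c)) (𝓝 (f x)) (𝓝 (x, f x)) :=
    (Continuous.prodMk_right x).tendsto _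
  filter_upwards [hlevel.eventually hsolve] with c ⟨⟨y, s⟩, hp, hclosest⟩
  obtain ⟨hyx, rfl⟩ : y - s • ∇ f y = x ∧ f y = c := Prod.ext_iff.1 hp
  exact existsUnique_dist_eq_infDist rfl (hclosest hyx)

end InnerProductSpace

/-- If `x ∈ L_t` is not a critical point, then for all sufficiently small
`η > 0` the metric projection of `x` onto `L_{t+η}` is a singleton, i.e. `x` has a unique
nearest point in `L_{t+η}`. -/
theorem projection_singleton {d : ℕ} (f : EuclideanSpace ℝ (Fin d) → ℝ)
    (hf : ContDiff ℝ 2 f) (hf_nonneg : ∀ x, 0 ≤ f x) (hf_int : ∫ x, f x = 1)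
    (t : ℝ) (ht : 0 < t) (ht_max : ∃ z, t < f z)
    (x : EuclideanSpace ℝ (Fin d)) (hx : f x = t) (hgx : gradient f x ≠ 0) :
    ∃ η₀ > 0, ∀ η : ℝ, 0 < η → η < η₀ →
      ∃! y, y ∈ {z : EuclideanSpace ℝ (Fin d) | f z = t + η} ∧
        dist x y = Metric.infDist x {z : EuclideanSpace ℝ (Fin d) | f z = t + η} := by
  obtain ⟨η₀, hη₀, h⟩ :=
    Metric.eventually_nhds_iff.1 (projection_singleton_general hf.contDiffAt hgx)
  exact ⟨η₀, hη₀, fun η hη hηη₀ => h (by simpa [hx, abs_of_pos hη] using hηη₀)⟩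
end

section
/- Let t ∈ (0, max f) and let x ∈ L_t be such that ∇f(x) ≠ 0. Then (P_{t,η}(x) − x)/η converges to ∇f(x)/‖∇f(x)‖² as η → 0⁺, where P_{t,η}(x) denotes the (eventually unique) nearest point of L_{t+η} to x. -/
open Metric Set Filter Topology MeasureTheory

/-!
Write `g = ∇f(x)` and `w = g / ‖g‖²`. In any direction where `f` increases at a rate larger than
`1`, the intermediate value theorem yields a point of the level `f x + η` at distance at most the
length of that direction times `|η|`; hence the rescaled displacement `v = (P η - x) / η` has norm
at most `‖w‖ = ‖g‖⁻¹` in the limit. On the other hand, the first-order expansion of `f` at `x`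
gives `⟪g, v⟫ → 1 = ⟪g, w⟫`. As `w` is the shortest vector on the hyperplane `⟪g, ·⟫ = 1`, this
forces `v → w`.
-/

theorem eventually_exists_mem_uIcc_eq_add_sub {φ : ℝ → ℝ} {m a : ℝ} (hφ : HasDerivAt φ m a)
    (hm : 1 < m) (hcont : ∀ᶠ s in 𝓝 a, ContinuousAt φ s) :
    ∀ᶠ b in 𝓝[≠] a, ∃ s ∈ uIcc a b, φ s = φ a + (b - a) := by
  have hcontOn : ∀ᶠ b in 𝓝[≠] a, ContinuousOn φ (uIcc a b) := by
    have hsmall : Tendsto (fun b => uIcc a b) (𝓝[≠] a) (𝓝 a).smallSets :=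
      tendsto_const_nhds.uIcc nhdsWithin_le_nhds
    filter_upwards [hsmall.eventually hcont.smallSets] with b hb
    exact fun s hs => (hb s hs).continuousWithinAt
  have hslope : ∀ᶠ b in 𝓝[≠] a, 1 < slope φ a b :=
    (hasDerivAt_iff_tendsto_slope.mp hφ).eventually (lt_mem_nhds hm)
  filter_upwards [hcontOn, hslope, self_mem_nhdsWithin] with b hφb hslope hne
  have hmem : φ a + (b - a) ∈ uIcc (φ a) (φ b) := by
    rw [slope_def_field] at hslope
    rcases lt_or_gt_of_ne hne with hlt | hgt
    · rw [lt_div_iff_of_neg (sub_neg.mpr hlt)] at hslope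
      exact mem_uIcc.mpr (Or.inr ⟨by linarith, by linarith⟩)
    · rw [lt_div_iff₀ (sub_pos.mpr hgt)] at hslope
      exact mem_uIcc.mpr (Or.inl ⟨by linarith, by linarith⟩)
  exact intermediate_value_uIcc hφb hmem

section NormedSpace

variable {E : Type*} [NormedAddCommGroup E] [NormedSpace ℝ E] {f : E → ℝ} {f' : E →L[ℝ] ℝ} {x : E}

theorem eventually_infDist_level_le_abs_mul_norm (hf : HasFDerivAt f f' x)
    (hcont : ∀ᶠ y in 𝓝 x, ContinuousAt f y) {w : E} (hw : 1 < f' w) :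
    ∀ᶠ η in 𝓝[≠] (0 : ℝ), infDist x {z | f z = f x + η} ≤ |η| * ‖w‖ := by
  let line (s : ℝ) : E := x + s • w
  have hline : HasDerivAt line w 0 := by
    simpa [line] using ((hasDerivAt_id (0 : ℝ)).smul_const w).const_add x
  have hline_zero : line 0 = x := by simp [line]
  have hline_cont : Continuous line := by fun_prop
  have hderiv : HasDerivAt (f ∘ line) (f' w) 0 :=
    HasFDerivAt.comp_hasDerivAt 0 (by rwa [hline_zero]) hline
  have hcomp_cont : ∀ᶠ s in 𝓝 0, ContinuousAt (f ∘ line) s := by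
    have hlim : Tendsto line (𝓝 0) (𝓝 x) := hline_zero ▸ hline_cont.tendsto 0
    filter_upwards [hlim.eventually hcont] with s hs
    exact hs.comp hline_cont.continuousAt
  filter_upwards [eventually_exists_mem_uIcc_eq_add_sub hderiv hw hcomp_cont]
    with η ⟨s, hs, hfs⟩
  have hlevel : line s ∈ {z | f z = f x + η} := by simpa [hline_zero] using hfs
  have hs_le : |s| ≤ |η| := by simpa using abs_sub_left_of_mem_uIcc hs
  calc infDist x {z | f z = f x + η} ≤ dist x (line s) := infDist_le_dist_of_mem hlevel
    _ = |s| * ‖w‖ := by simp [line, norm_smul]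
    _ ≤ |η| * ‖w‖ := by gcongr

theorem exists_one_lt_apply_of_inv_opNorm_lt (hf' : f' ≠ 0) {c : ℝ} (hc : ‖f'‖⁻¹ < c) :
    ∃ w, ‖w‖ ≤ c ∧ 1 < f' w := by
  have hnorm : 0 < ‖f'‖ := norm_pos_iff.mpr hf'
  have hc_pos : 0 < c := (inv_pos.mpr hnorm).trans hc
  obtain ⟨v, hv, hfv⟩ := f'.exists_lt_apply_of_lt_opNorm (inv_lt_of_inv_lt₀ hnorm hc)
  rw [Real.norm_eq_abs, inv_lt_iff_one_lt_mul₀' hc_pos] at hfv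
  have hcv : c * ‖v‖ ≤ c := mul_le_of_le_one_right hc_pos.le hv.le
  rcases abs_choice (f' v) with habs | habs <;> rw [habs] at hfv
  · exact ⟨c • v, by rwa [norm_smul_of_nonneg hc_pos.le], by simpa using hfv⟩
  · exact ⟨c • -v, by rwa [norm_smul_of_nonneg hc_pos.le, norm_neg], by simpa using hfv⟩

theorem eventually_infDist_level_le_mul_abs (hf : HasFDerivAt f f' x)
    (hcont : ∀ᶠ y in 𝓝 x, ContinuousAt f y) (hf' : f' ≠ 0) {c : ℝ} (hc : ‖f'‖⁻¹ < c) :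
    ∀ᶠ η in 𝓝[≠] (0 : ℝ), infDist x {z | f z = f x + η} ≤ c * |η| := by
  obtain ⟨w, hwc, hw⟩ := exists_one_lt_apply_of_inv_opNorm_lt hf' hc
  filter_upwards [eventually_infDist_level_le_abs_mul_norm hf hcont hw] with η hη
  calc infDist x {z | f z = f x + η} ≤ |η| * ‖w‖ := hη
    _ ≤ |η| * c := by gcongr
    _ = c * |η| := mul_comm _ _

theorem norm_inv_norm_sq_smul_self (g : E) : ‖(‖g‖ ^ 2)⁻¹ • g‖ = ‖g‖⁻¹ := by
  rcases eq_or_ne g 0 with rfl | hg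
  · simp
  · rw [norm_smul_of_nonneg (by positivity)]
    field_simp

end NormedSpace

theorem tendsto_inv_smul_sub_sub_fderiv_apply {ι 𝕜 E F : Type*} [NontriviallyNormedField 𝕜]
    [NormedAddCommGroup E] [NormedSpace 𝕜 E] [NormedAddCommGroup F] [NormedSpace 𝕜 F]
    {f : E → F} {f' : E →L[𝕜] F} {x : E} (hf : HasFDerivAt f f' x) {l : Filter ι} {y : ι → E}
    {r : ι → 𝕜} (hy : (fun i => y i - x) =O[l] r) (hr : Tendsto r l (𝓝 0)) :
    Tendsto (fun i => (r i)⁻¹ • (f (y i) - f x) - f' ((r i)⁻¹ • (y i - x))) l (𝓝 0) := by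
  have hyx : Tendsto y l (𝓝 x) := tendsto_sub_nhds_zero_iff.mp (hy.trans_tendsto hr)
  have hlittle : (fun i => f (y i) - f x - f' (y i - x)) =o[l] r :=
    (hf.isLittleO.comp_tendsto hyx).trans_isBigO hy
  simpa only [map_smul, ← smul_sub] using hlittle.tendsto_inv_smul_nhds_zero

section InnerProductSpace

variable {E : Type*} [NormedAddCommGroup E] [InnerProductSpace ℝ E]

theorem tendsto_of_tendsto_inner_of_eventually_norm_le {ι : Type*} {l : Filter ι} {v : ι → E}
    {w : E} (hinner : Tendsto (fun i => inner ℝ w (v i)) l (𝓝 (‖w‖ ^ 2)))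
    (hnorm : ∀ c > ‖w‖, ∀ᶠ i in l, ‖v i‖ ≤ c) : Tendsto v l (𝓝 w) := by
  refine Metric.tendsto_nhds.mpr fun ε hε => ?_
  have hε2 : 0 < ε ^ 2 := by positivity
  obtain ⟨c, hc_sq, hc⟩ : ∃ c, c ^ 2 < ‖w‖ ^ 2 + ε ^ 2 / 2 ∧ ‖w‖ < c := by
    have hsq : Tendsto (fun c : ℝ => c ^ 2) (𝓝[>] ‖w‖) (𝓝 (‖w‖ ^ 2)) :=
      ((continuous_pow 2).tendsto _).mono_left nhdsWithin_le_nhds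
    exact ((hsq.eventually (gt_mem_nhds (by linarith))).and self_mem_nhdsWithin).exists
  have hinner_gt : ∀ᶠ i in l, ‖w‖ ^ 2 - ε ^ 2 / 4 < inner ℝ w (v i) :=
    hinner.eventually (lt_mem_nhds (by linarith))
  filter_upwards [hnorm c hc, hinner_gt] with i hvc hwv
  rw [dist_eq_norm]
  refine lt_of_pow_lt_pow_left₀ 2 hε.le ?_
  calc ‖v i - w‖ ^ 2 = ‖v i‖ ^ 2 - 2 * inner ℝ w (v i) + ‖w‖ ^ 2 := by
        rw [norm_sub_sq_real, real_inner_comm]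
    _ ≤ c ^ 2 - 2 * inner ℝ w (v i) + ‖w‖ ^ 2 := by gcongr
    _ < ε ^ 2 := by linarith

theorem projection_infinitesimal_general [CompleteSpace E] {f : E → ℝ} {g x : E}
    (hf : HasGradientAt f g x) (hcont : ∀ᶠ y in 𝓝 x, ContinuousAt f y) (hg : g ≠ 0)
    {l : Filter ℝ} (hl : l ≤ 𝓝[≠] 0) {P : ℝ → E}
    (hP : ∀ᶠ η in l, P η ∈ {z | f z = f x + η} ∧ dist x (P η) = infDist x {z | f z = f x + η}) :
    Tendsto (fun η => η⁻¹ • (P η - x)) l (𝓝 ((‖g‖ ^ 2)⁻¹ • g)) := by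
  have hne : ∀ᶠ η in l, η ≠ 0 := hl self_mem_nhdsWithin
  have hbound (c : ℝ) (hc : ‖g‖⁻¹ < c) : ∀ᶠ η in l, ‖P η - x‖ ≤ c * |η| := by
    have hdist := eventually_infDist_level_le_mul_abs hf.hasFDerivAt hcont (by simpa using hg)
      (by simpa using hc)
    filter_upwards [hl hdist, hP] with η hη hPη
    rwa [← dist_eq_norm, dist_comm, hPη.2]
  have hinner : Tendsto (fun η => inner ℝ g (η⁻¹ • (P η - x))) l (𝓝 1) := by
    have hO : (fun η => P η - x) =O[l] id := .of_bound _ (hbound _ (lt_add_one _))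
    have hexp : Tendsto (fun η => 1 - inner ℝ g (η⁻¹ • (P η - x))) l (𝓝 0) := by
      refine (tendsto_inv_smul_sub_sub_fderiv_apply hf.hasFDerivAt hO
        (hl.trans nhdsWithin_le_nhds)).congr' ?_
      filter_upwards [hP, hne] with η ⟨(hfP : f (P η) = f x + η), _⟩ hη
      simp only [hfP, id_eq, add_sub_cancel_left, smul_eq_mul, inv_mul_cancel₀ hη,
        InnerProductSpace.toDual_apply_apply]
    simpa using hexp.const_sub 1
  refine tendsto_of_tendsto_inner_of_eventually_norm_le ?_ fun c hc => ?_
  · simpa [real_inner_smul_left, norm_inv_norm_sq_smul_self] using hinner.const_mul (‖g‖ ^ 2)⁻¹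
  · rw [norm_inv_norm_sq_smul_self] at hc
    filter_upwards [hbound c hc, hne] with η hη hη_ne
    rwa [norm_smul, norm_inv, Real.norm_eq_abs, inv_mul_le_iff₀' (abs_pos.mpr hη_ne)]

end InnerProductSpace

/-- If `x ∈ L_t` with `∇f(x) ≠ 0`, and `P η` is (eventually, as `η → 0⁺`) a
nearest point to `x` in `L_{t+η}`, then `(P η - x)/η → ∇f(x)/‖∇f(x)‖²` as `η → 0⁺`. -/
theorem projection_infinitesimal {d : ℕ} (f : EuclideanSpace ℝ (Fin d) → ℝ)
    (hf : ContDiff ℝ 2 f) (hf_nonneg : ∀ x, 0 ≤ f x) (hf_int : ∫ x, f x = 1)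
    (t : ℝ) (ht : 0 < t) (ht_max : ∃ z, t < f z)
    (x : EuclideanSpace ℝ (Fin d)) (hx : f x = t) (hgx : gradient f x ≠ 0)
    (P : ℝ → EuclideanSpace ℝ (Fin d))
    (hP : ∀ᶠ η in 𝓝[>] (0 : ℝ),
      P η ∈ {z : EuclideanSpace ℝ (Fin d) | f z = t + η} ∧
      dist x (P η) = Metric.infDist x {z : EuclideanSpace ℝ (Fin d) | f z = t + η}) :
    Tendsto (fun η : ℝ => η⁻¹ • (P η - x)) (𝓝[>] (0 : ℝ))
      (𝓝 ((‖gradient f x‖ ^ 2)⁻¹ • gradient f x)) := by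
  subst hx
  exact projection_infinitesimal_general (hf.differentiable two_ne_zero x).hasGradientAt
    (.of_forall fun _ => hf.continuous.continuousAt) hgx (nhdsGT_le_nhdsNE 0) hP
end

section
/- Suppose t ∈ (0, max f), the level set L_t is nonempty and compact, and there are no critical points of f on L_t. Then for all sufficiently small η > 0, the metric projection P_{t,η} onto L_{t+η}, restricted to L_t, is a diffeomorphism (a continuously differentiable bijection with continuously differentiable inverse) from L_t onto L_{t+η}. -/
open Metric Set Filter Topology MeasureTheory

/-!
Let `L_c` be the level set of `f` at `c`. As `s` varies, the gradient step `y - s • ∇ f y` runs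
through the normal line of a level set at `y`. At a regular point `y`, the maps
`F (y, s) = (y - s • ∇ f y, f y)` and `G (y, s) = (y, f (y - s • ∇ f y))` have invertible
derivative at `(y, 0)`, so by compactness both are diffeomorphisms from a neighborhood of
`L_t × {0}` onto an open set. By Lagrange multipliers a nearest point `y ∈ L_c` to `x ∈ L_t`
satisfies `x = y - s • ∇ f y` for some `s`, which is small when `c` is close to `t`. Hence
`F⁻¹ (x, c)` determines the projection `y` of `x`, and `G⁻¹ (y, t)` determines the point `x`
projecting to `y`.

Since `f` is integrable, its superlevel set at `t` is bounded; by compactness the levels slightly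
above `t` then stay close to `L_t`.
-/

open scoped Gradient

section Superlevel

variable {E : Type*} [NormedAddCommGroup E] [NormedSpace ℝ E] [MeasurableSpace E] [BorelSpace E]
  {μ : Measure E} [μ.IsAddLeftInvariant] [μ.IsOpenPosMeasure]

theorem measure_halfSpace_eq_top [WeaklyLocallyCompactSpace E] {ℓ : E →L[ℝ] ℝ} (hℓ : ℓ ≠ 0)
    (c : ℝ) : μ {x | c < ℓ x} = ⊤ := by
  obtain ⟨v, hv⟩ : ∃ v, ℓ v = 1 := by
    obtain ⟨w, hw⟩ := DFunLike.ne_iff.1 hℓ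
    exact ⟨(ℓ w)⁻¹ • w, by simpa using inv_mul_cancel₀ hw⟩
  have : Nontrivial E := ⟨v, 0, fun h => by simp [h] at hv⟩
  have : NoncompactSpace E := NormedSpace.noncompactSpace ℝ E
  -- The translates of the half space by `-n • v` exhaust `E` and all have the same measure.
  let H (n : ℕ) : Set E := ((n : ℝ) • v + ·) ⁻¹' {x | c < ℓ x}
  have mem_H (n : ℕ) (x : E) : x ∈ H n ↔ c < n + ℓ x := by simp [H, hv]
  have hmono : Monotone H := fun m n hmn x hx => by
    rw [mem_H] at hx ⊢
    exact hx.trans_le (by gcongr)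
  have hcover : ⋃ n, H n = univ := eq_univ_of_forall fun x => by
    obtain ⟨n, hn⟩ := exists_nat_gt (c - ℓ x)
    exact mem_iUnion.2 ⟨n, (mem_H n x).2 (by linarith)⟩
  calc μ {x | c < ℓ x} = ⨆ n, μ (H n) := by simp only [H, measure_preimage_add, ciSup_const]
    _ = μ univ := by rw [← hmono.measure_iUnion, hcover]
    _ = ⊤ := measure_univ_of_isAddLeftInvariant μ

/- If `t ≤ f x₀` at a point `x₀` outside a ball containing the level set, then `f` stays above `t`
on a half space through `x₀` that misses the ball, and that half space has infinite measure. -/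
theorem isCompact_superlevel_of_isBounded_level [ProperSpace E] {f : E → ℝ} (hf : Continuous f)
    {t : ℝ} (hlevel : Bornology.IsBounded {x | f x = t}) (hμ : μ {x | t ≤ f x} ≠ ⊤) :
    IsCompact {x | t ≤ f x} := by
  obtain ⟨R, hR₀, hR⟩ := hlevel.exists_pos_norm_le
  refine isCompact_of_isClosed_isBounded (isClosed_le continuous_const hf)
    (isBounded_iff_forall_norm_le.2 ⟨R, fun x₀ hx₀ => ?_⟩)
  by_contra! hlt
  obtain ⟨ℓ, hℓ_norm, hℓ_x₀⟩ := exists_dual_vector'' ℝ x₀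
  replace hℓ_x₀ : ℓ x₀ = ‖x₀‖ := hℓ_x₀
  have hℓ : ℓ ≠ 0 := by
    rintro rfl
    exact (hR₀.trans hlt).ne hℓ_x₀
  have hconv : Convex ℝ {x | R < ℓ x} := convex_halfSpace_gt ℓ.isBoundedLinearMap.toIsLinearMap R
  have norm_gt {x : E} (hx : R < ℓ x) : R < ‖x‖ :=
    hx.trans_le <| (le_abs_self _).trans <| ℓ.le_of_opNorm_le hℓ_norm x |>.trans_eq (one_mul _)
  have hsub : {x | R < ℓ x} ⊆ {x | t ≤ f x} := fun x hx => by
    by_contra! hxt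
    obtain ⟨z, hz, hzt⟩ := hconv.isPreconnected.intermediate_value hx (hlt.trans_eq hℓ_x₀.symm)
      hf.continuousOn ⟨(not_le.1 hxt).le, hx₀⟩
    exact (norm_gt hz).not_ge (hR z hzt)
  exact hμ (measure_mono_top hsub (measure_halfSpace_eq_top hℓ R))

end Superlevel

theorem eventually_level_subset_of_isCompact_preimage_Icc {X α : Type*} [TopologicalSpace X]
    [TopologicalSpace α] [LinearOrder α] [OrderTopology α] {f : X → α} (hf : Continuous f)
    {t b : α} (htb : t < b) (hcomp : IsCompact (f ⁻¹' Icc t b)) {O : Set X} (hO : IsOpen O)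
    (htO : {x | f x = t} ⊆ O) : ∀ᶠ c in 𝓝[≥] t, {z | f z = c} ⊆ O := by
  have hclosed : IsClosed (f '' (f ⁻¹' Icc t b \ O)) := ((hcomp.diff hO).image hf).isClosed
  have hnotMem : t ∉ f '' (f ⁻¹' Icc t b \ O) := fun ⟨_, hx, hxt⟩ => hx.2 (htO hxt)
  filter_upwards [Icc_mem_nhdsGE htb,
    nhdsWithin_le_nhds (hclosed.isOpen_compl.mem_nhds hnotMem)] with c hc hc' z hz
  by_contra hzO
  obtain rfl : f z = c := hz
  exact hc' ⟨z, ⟨hc, hzO⟩, rfl⟩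

theorem exists_openPartialHomeomorph_of_injOn_isCompact {𝕜 E F : Type*} [RCLike 𝕜]
    [NormedAddCommGroup E] [NormedSpace 𝕜 E] [CompleteSpace E] [NormedAddCommGroup F]
    [NormedSpace 𝕜 F] {n : WithTop ℕ∞} (hn : n ≠ 0) {Φ : E → F} (hΦ : ContDiff 𝕜 n Φ)
    {K : Set E} (hK : IsCompact K) (hinj : InjOn Φ K)
    (hinv : ∀ p ∈ K, (fderiv 𝕜 Φ p).IsInvertible) :
    ∃ e : OpenPartialHomeomorph E F, K ⊆ e.source ∧ ⇑e = Φ ∧ ContDiffOn 𝕜 n e.symm e.target := by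
  have hderiv (p : E) : HasStrictFDerivAt Φ (fderiv 𝕜 Φ p) p := hΦ.contDiffAt.hasStrictFDerivAt hn
  have hloc : ∀ p ∈ K, ∃ u ∈ 𝓝 p, InjOn Φ u := fun p hp => by
    obtain ⟨A, hA⟩ := hinv p hp
    have hp' : HasStrictFDerivAt Φ (A : E →L[𝕜] F) p := hA ▸ hderiv p
    exact ⟨_, (hp'.toOpenPartialHomeomorph Φ).open_source.mem_nhds
      hp'.mem_toOpenPartialHomeomorph_source, (hp'.toOpenPartialHomeomorph Φ).injOn⟩
  obtain ⟨W, hWo, hKW, hWinj⟩ :=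
    hinj.exists_isOpen_superset hK (fun p _ => hΦ.continuous.continuousAt) hloc
  have hinv_open : IsOpen {p | (fderiv 𝕜 Φ p).IsInvertible} :=
    ContinuousLinearEquiv.isOpen.preimage (hΦ.continuous_fderiv hn)
  set S := W ∩ {p | (fderiv 𝕜 Φ p).IsInvertible}
  have hS : IsOpen S := hWo.inter hinv_open
  have hSopen : IsOpenMap (S.domRestrict Φ) := isOpenMap_iff_nhds_le.2 fun ⟨p, hp⟩ => by
    obtain ⟨A, hA⟩ := hp.2
    have hp' : HasStrictFDerivAt Φ (A : E →L[𝕜] F) p := hA ▸ hderiv p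
    rw [Set.domRestrict_eq, ← map_map, hS.isOpenEmbedding_subtypeVal.map_nhds_eq]
    exact hp'.map_nhds_eq_of_equiv.ge
  let e := OpenPartialHomeomorph.ofContinuousOpenRestrict
    ((hWinj.mono inter_subset_left : InjOn Φ S).toPartialEquiv Φ S) hΦ.continuous.continuousOn
    hSopen hS
  refine ⟨e, subset_inter hKW hinv, rfl, fun q hq => ContDiffAt.contDiffWithinAt ?_⟩
  obtain ⟨A, hA⟩ := (e.map_target hq).2
  exact e.contDiffAt_symm hq (hA ▸ (hderiv _).hasFDerivAt) hΦ.contDiffAt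

section MetricProjection

/-- The metric projection of `x` onto `A`, as the set of all nearest points. -/
def metricProjection {X : Type*} [PseudoMetricSpace X] (A : Set X) (x : X) : Set X :=
  {y | y ∈ A ∧ dist x y = infDist x A}

theorem metricProjection_nonempty_of_isCompact {X : Type*} [PseudoMetricSpace X] {A : Set X}
    (hA : IsCompact A) (hne : A.Nonempty) (x : X) : (metricProjection A x).Nonempty :=
  let ⟨y, hy, hxy⟩ := hA.exists_infDist_eq_dist hne x
  ⟨y, hy, hxy.symm⟩

theorem eventually_metricProjection_level_subset {X Y : Type*} [PseudoMetricSpace X]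
    [TopologicalSpace Y] {f : X → Y} {x₀ : X} (hf : 𝓝 (f x₀) ≤ map f (𝓝 x₀)) {U : Set X}
    (hU : U ∈ 𝓝 x₀) : ∀ᶠ q : Y × X in 𝓝 (f x₀, x₀),
      {z | f z = q.1}.Nonempty ∧ metricProjection {z | f z = q.1} q.2 ⊆ U := by
  obtain ⟨r, hr, hball⟩ := Metric.mem_nhds_iff.1 hU
  have hlevel : ∀ᶠ c in 𝓝 (f x₀), ∃ z ∈ ball x₀ (r / 3), f z = c :=
    hf (image_mem_map (ball_mem_nhds x₀ (by positivity)))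
  have hclose : ∀ᶠ x in 𝓝 x₀, x ∈ ball x₀ (r / 3) := ball_mem_nhds x₀ (by positivity)
  rw [nhds_prod_eq]
  filter_upwards [hlevel.prod_mk hclose] with ⟨c, x⟩ ⟨⟨z, hz, hzc⟩, hx⟩
  refine ⟨⟨z, hzc⟩, fun y hy => hball ?_⟩
  have hyz : dist x y ≤ dist x z := hy.2.trans_le (infDist_le_dist_of_mem hzc)
  rw [mem_ball] at hx hz ⊢
  linarith [dist_triangle_left y x₀ x, dist_triangle_right x z x₀]

end MetricProjection

section GradientStep

variable {E : Type*} [NormedAddCommGroup E] [InnerProductSpace ℝ E]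

theorem isInvertible_fst_sub_smulRight_prod_inner {g : E} (hg : g ≠ 0) :
    ((.fst ℝ E ℝ - (ContinuousLinearMap.snd ℝ E ℝ).smulRight g).prod
      (innerSL ℝ g ∘L .fst ℝ E ℝ)).IsInvertible := by
  have hg' : ‖g‖ ^ 2 ≠ 0 := pow_ne_zero 2 (norm_ne_zero_iff.2 hg)
  have cancel (a : ℝ) : (‖g‖ ^ 2)⁻¹ * a * ‖g‖ ^ 2 = a := by
    rw [mul_right_comm, inv_mul_cancel₀ hg', one_mul]
  -- Pairing `w = v - s • g` with `g` recovers `s` from `w` and `⟪g, v⟫`.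
  let s : E × ℝ →L[ℝ] ℝ := (‖g‖ ^ 2)⁻¹ • (.snd ℝ E ℝ - innerSL ℝ g ∘L .fst ℝ E ℝ)
  refine .of_inverse (g := (.fst ℝ E ℝ + s.smulRight g).prod s) ?_ ?_
  · ext v <;> simp [s, inner_add_right, inner_smul_right, cancel, hg]
  · ext v <;> simp [s, hg]

theorem isInvertible_fst_prod_inner_sub_smulRight {g : E} (hg : g ≠ 0) :
    ((ContinuousLinearMap.fst ℝ E ℝ).prod (innerSL ℝ g ∘L
      (.fst ℝ E ℝ - (ContinuousLinearMap.snd ℝ E ℝ).smulRight g))).IsInvertible := by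
  have hg' : ‖g‖ ^ 2 ≠ 0 := pow_ne_zero 2 (norm_ne_zero_iff.2 hg)
  have cancel (a : ℝ) : (‖g‖ ^ 2)⁻¹ * a * ‖g‖ ^ 2 = a := by
    rw [mul_right_comm, inv_mul_cancel₀ hg', one_mul]
  let s : E × ℝ →L[ℝ] ℝ := (‖g‖ ^ 2)⁻¹ • (innerSL ℝ g ∘L .fst ℝ E ℝ - .snd ℝ E ℝ)
  refine .of_inverse (g := (ContinuousLinearMap.fst ℝ E ℝ).prod s) ?_ ?_
  · ext v <;> simp [s, inner_smul_right, cancel, hg]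
  · ext v <;> simp [s, hg]

variable [CompleteSpace E] {f : E → ℝ} {n : WithTop ℕ∞} {x y : E}

/-- The gradient descent step of length `p.2` from `p.1`; as `p.2` varies it parametrizes the normal
line at `p.1` of the level set through `p.1`. -/
noncomputable def gradientStep (f : E → ℝ) (p : E × ℝ) : E := p.1 - p.2 • ∇ f p.1

/-- A gradient step, recorded by its endpoint and the level it starts from. -/
noncomputable def endpointStartLevel (f : E → ℝ) (p : E × ℝ) : E × ℝ := (gradientStep f p, f p.1)

/-- A gradient step, recorded by its starting point and the level it ends on. -/
noncomputable def startpointEndLevel (f : E → ℝ) (p : E × ℝ) : E × ℝ := (p.1, f (gradientStep f p))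

@[simp]
theorem gradientStep_zero (f : E → ℝ) (y : E) : gradientStep f (y, 0) = y := by
  simp [gradientStep]

theorem contDiff_gradient (hf : ContDiff ℝ (n + 1) f) : ContDiff ℝ n (∇ f) :=
  (InnerProductSpace.toDual ℝ E).symm.contDiff.comp (hf.fderiv_right le_rfl)

theorem contDiff_gradientStep (hf : ContDiff ℝ (n + 1) f) : ContDiff ℝ n (gradientStep f) :=
  contDiff_fst.sub (contDiff_snd.smul ((contDiff_gradient hf).comp contDiff_fst))

theorem contDiff_endpointStartLevel (hf : ContDiff ℝ (n + 1) f) :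
    ContDiff ℝ n (endpointStartLevel f) :=
  (contDiff_gradientStep hf).prodMk ((hf.of_le le_self_add).comp contDiff_fst)

theorem contDiff_startpointEndLevel (hf : ContDiff ℝ (n + 1) f) :
    ContDiff ℝ n (startpointEndLevel f) :=
  contDiff_fst.prodMk ((hf.of_le le_self_add).comp (contDiff_gradientStep hf))

theorem hasFDerivAt_gradientStep_zero (hf : DifferentiableAt ℝ (∇ f) y) :
    HasFDerivAt (gradientStep f)
      (.fst ℝ E ℝ - (ContinuousLinearMap.snd ℝ E ℝ).smulRight (∇ f y)) (y, 0) := by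
  have hgrad : HasFDerivAt (fun p : E × ℝ => ∇ f p.1) (fderiv ℝ (∇ f) y ∘L .fst ℝ E ℝ) (y, 0) :=
    HasFDerivAt.comp (g := ∇ f) (y, (0 : ℝ)) hf.hasFDerivAt hasFDerivAt_fst
  refine (hasFDerivAt_fst.sub (hasFDerivAt_snd.smul hgrad)).congr_fderiv ?_
  ext v <;> simp

theorem isInvertible_fderiv_endpointStartLevel (hf : DifferentiableAt ℝ f y)
    (hgrad : DifferentiableAt ℝ (∇ f) y) (hy : ∇ f y ≠ 0) :
    (fderiv ℝ (endpointStartLevel f) (y, 0)).IsInvertible := by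
  have hlevel : HasFDerivAt (fun p : E × ℝ => f p.1) (innerSL ℝ (∇ f y) ∘L .fst ℝ E ℝ) (y, 0) :=
    HasFDerivAt.comp (y, (0 : ℝ)) hf.hasGradientAt.hasFDerivAt hasFDerivAt_fst
  have hderiv : HasFDerivAt (endpointStartLevel f) _ (y, 0) :=
    (hasFDerivAt_gradientStep_zero hgrad).prodMk hlevel
  exact hderiv.fderiv ▸ isInvertible_fst_sub_smulRight_prod_inner hy

theorem isInvertible_fderiv_startpointEndLevel (hf : DifferentiableAt ℝ f y)
    (hgrad : DifferentiableAt ℝ (∇ f) y) (hy : ∇ f y ≠ 0) :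
    (fderiv ℝ (startpointEndLevel f) (y, 0)).IsInvertible := by
  have hf' : HasFDerivAt f (innerSL ℝ (∇ f y)) (gradientStep f (y, 0)) := by
    rw [gradientStep_zero]
    exact hf.hasGradientAt.hasFDerivAt
  have hderiv : HasFDerivAt (startpointEndLevel f) _ (y, 0) :=
    hasFDerivAt_fst.prodMk (hf'.comp (y, (0 : ℝ)) (hasFDerivAt_gradientStep_zero hgrad))
  exact hderiv.fderiv ▸ isInvertible_fst_prod_inner_sub_smulRight hy

theorem exists_openPartialHomeomorph_endpointStartLevel (hn : n ≠ 0) (hf : ContDiff ℝ (n + 1) f)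
    {L : Set E} (hL : IsCompact L) (hreg : ∀ x ∈ L, ∇ f x ≠ 0) :
    ∃ e : OpenPartialHomeomorph (E × ℝ) (E × ℝ), L ×ˢ {0} ⊆ e.source ∧
      ⇑e = endpointStartLevel f ∧ ContDiffOn ℝ n e.symm e.target := by
  refine exists_openPartialHomeomorph_of_injOn_isCompact hn (contDiff_endpointStartLevel hf)
    (hL.prod isCompact_singleton) ?_ ?_
  · rintro ⟨x, _⟩ ⟨_, rfl⟩ ⟨y, _⟩ ⟨_, rfl⟩ hxy
    simpa [endpointStartLevel] using congrArg Prod.fst hxy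
  · rintro ⟨x, _⟩ ⟨hx, rfl⟩
    exact isInvertible_fderiv_endpointStartLevel (hf.differentiable (by simp) x)
      ((contDiff_gradient hf).differentiable hn x) (hreg x hx)

theorem exists_openPartialHomeomorph_startpointEndLevel (hn : n ≠ 0) (hf : ContDiff ℝ (n + 1) f)
    {L : Set E} (hL : IsCompact L) (hreg : ∀ x ∈ L, ∇ f x ≠ 0) :
    ∃ e : OpenPartialHomeomorph (E × ℝ) (E × ℝ), L ×ˢ {0} ⊆ e.source ∧
      ⇑e = startpointEndLevel f ∧ ContDiffOn ℝ n e.symm e.target := by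
  refine exists_openPartialHomeomorph_of_injOn_isCompact hn (contDiff_startpointEndLevel hf)
    (hL.prod isCompact_singleton) ?_ ?_
  · rintro ⟨x, _⟩ ⟨_, rfl⟩ ⟨y, _⟩ ⟨_, rfl⟩ hxy
    simpa [startpointEndLevel] using congrArg Prod.fst hxy
  · rintro ⟨x, _⟩ ⟨hx, rfl⟩
    exact isInvertible_fderiv_startpointEndLevel (hf.differentiable (by simp) x)
      ((contDiff_gradient hf).differentiable hn x) (hreg x hx)

theorem exists_gradientStep_eq_of_mem_metricProjection (hf : ContDiffAt ℝ 1 f y)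
    (hy : ∇ f y ≠ 0) (hyx : y ∈ metricProjection {z | f z = f y} x) :
    ∃ s, gradientStep f (y, s) = x := by
  have hdist : HasStrictFDerivAt (fun z : E => ‖z - x‖ ^ 2) (2 • innerSL ℝ (y - x)) y := by
    simpa [Function.comp_def] using
      (hasStrictFDerivAt_norm_sq (y - x)).comp y ((hasStrictFDerivAt_id (𝕜 := ℝ) y).sub_const x)
  have hmin : IsMinOn (fun z : E => ‖z - x‖ ^ 2) {z | f z = f y} y := fun z hz => by
    have hle : dist x y ≤ dist x z := hyx.2.trans_le (infDist_le_dist_of_mem hz)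
    rw [dist_eq_norm_sub', dist_eq_norm_sub'] at hle
    exact pow_le_pow_left₀ (norm_nonneg _) hle 2
  obtain ⟨a, b, hab, hmult⟩ := IsLocalExtrOn.exists_multipliers_of_hasStrictFDerivAt_1d
    (.inl hmin.localize) (hf.hasStrictFDerivAt one_ne_zero) hdist
  have hnormal : a • ∇ f y + (2 * b) • (y - x) = 0 := ext_inner_right ℝ fun v => by
    have := DFunLike.congr_fun hmult v
    simp only [_root_.add_apply, _root_.smul_apply, innerSL_apply_apply, _root_.zero_apply,
      smul_eq_mul, nsmul_eq_mul, Nat.cast_ofNat] at this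
    simp only [inner_add_left, real_inner_smul_left, inner_gradient_left, inner_zero_left]
    linarith
  have hb : b ≠ 0 := by
    rintro rfl
    obtain rfl : a = 0 := by simpa [hy] using hnormal
    exact hab rfl
  refine ⟨-(a / (2 * b)), ?_⟩
  rw [gradientStep]
  linear_combination (norm := skip) (2 * b)⁻¹ • hnormal
  match_scalars <;> field_simp <;> ring

theorem eventually_mem_of_gradientStep_eq {x₀ : E} (hcont : ContinuousAt (∇ f) x₀)
    (hx₀ : ∇ f x₀ ≠ 0) {W : Set (E × ℝ)} (hW : W ∈ 𝓝 (x₀, 0)) :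
    ∀ᶠ q : E × E in 𝓝 (x₀, x₀),
      ∇ f q.2 ≠ 0 ∧ ∀ s, gradientStep f (q.2, s) = q.1 → (q.2, s) ∈ W := by
  let σ (q : E × E) : ℝ := inner ℝ (∇ f q.2) (q.2 - q.1) / inner ℝ (∇ f q.2) (∇ f q.2)
  have hgrad : ContinuousAt (fun q : E × E => ∇ f q.2) (x₀, x₀) :=
    ContinuousAt.comp (g := ∇ f) (x := (x₀, x₀)) hcont continuousAt_snd
  have hσ : ContinuousAt σ (x₀, x₀) :=
    (hgrad.inner (continuousAt_snd.sub continuousAt_fst)).div (hgrad.inner hgrad)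
      (inner_self_ne_zero.2 hx₀)
  have hσW : ∀ᶠ q : E × E in 𝓝 (x₀, x₀), (q.2, σ q) ∈ W :=
    (continuousAt_snd.prodMk hσ).eventually_mem (by simpa [σ] using hW)
  filter_upwards [hσW, hgrad.eventually_ne hx₀] with ⟨x, y⟩ hmem hy
  refine ⟨hy, fun s hs => ?_⟩
  obtain rfl : gradientStep f (y, s) = x := hs
  have hsσ : σ (gradientStep f (y, s), y) = s := by
    have hyx : y - gradientStep f (y, s) = s • ∇ f y := sub_sub_cancel _ _
    have hg : inner ℝ (∇ f y) (∇ f y) ≠ 0 := inner_self_ne_zero.2 hy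
    simp only [σ, hyx, inner_smul_right, mul_div_cancel_right₀ _ hg]
  exact hsσ ▸ hmem

theorem eventually_exists_gradientStep_eq_of_mem_metricProjection (hf : ContDiff ℝ 1 f) {x₀ : E}
    (hx₀ : ∇ f x₀ ≠ 0) {W : Set (E × ℝ)} (hW : W ∈ 𝓝 (x₀, 0)) :
    ∀ᶠ q : ℝ × E in 𝓝 (f x₀, x₀), {z | f z = q.1}.Nonempty ∧
      ∀ y ∈ metricProjection {z | f z = q.1} q.2,
        ∃ s, (y, s) ∈ W ∧ gradientStep f (y, s) = q.2 := by
  have hcont : Continuous (∇ f) := (contDiff_gradient (n := 0) (by simpa using hf)).continuous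
  obtain ⟨U, hU, V, hV, hUV⟩ :=
    mem_nhds_prod_iff.1 (eventually_mem_of_gradientStep_eq hcont.continuousAt hx₀ hW)
  have hsurj : (fderiv ℝ f x₀).range = ⊤ := by
    refine LinearMap.range_eq_top.2 (LinearMap.surjective fun h => hx₀ ?_)
    exact ext_inner_right ℝ fun v => by
      simpa [inner_gradient_left] using DFunLike.congr_fun h v
  have hopen : 𝓝 (f x₀) ≤ map f (𝓝 x₀) :=
    ((hf.contDiffAt.hasStrictFDerivAt one_ne_zero).map_nhds_eq_of_surj hsurj).ge
  filter_upwards [eventually_metricProjection_level_subset hopen hV,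
    continuousAt_snd.eventually_mem hU] with ⟨c, x⟩ ⟨hne, hproj⟩ hx
  refine ⟨hne, fun y hy => ?_⟩
  obtain ⟨hy_reg, hy_mem⟩ := hUV (mk_mem_prod hx (hproj hy))
  obtain rfl : f y = c := hy.1
  obtain ⟨s, hs⟩ := exists_gradientStep_eq_of_mem_metricProjection hf.contDiffAt hy_reg hy
  exact ⟨s, hy_mem s hs, hs⟩

end GradientStep

section ProjectionDiffeo

variable {E : Type*} [NormedAddCommGroup E] [InnerProductSpace ℝ E] {n : WithTop ℕ∞}

/-- The metric projection onto `B` is single-valued on `A` and restricts to a `C^n` diffeomorphism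
from `A` onto `B`. Smoothness of the projection `P` and of its inverse `Q` means that they extend to
`C^n` maps on open neighborhoods of `A` and `B`. -/
def IsProjectionDiffeo (n : WithTop ℕ∞) (A B : Set E) : Prop :=
  (∀ x ∈ A, ∃! y, y ∈ metricProjection B x) ∧
    ∃ (U V : Set E) (P Q : E → E), IsOpen U ∧ IsOpen V ∧ A ⊆ U ∧ B ⊆ V ∧
      ContDiffOn ℝ n P U ∧ ContDiffOn ℝ n Q V ∧ (∀ x ∈ A, P x ∈ metricProjection B x) ∧
      P '' A = B ∧ (∀ x ∈ A, Q (P x) = x) ∧ ∀ z ∈ B, P (Q z) = z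

variable [CompleteSpace E] {f : E → ℝ} {t : ℝ}

/- With `F (p, s) = (x, c)` and `G (p, s) = (p, t)` for the step `(p, s)` from `p` on level `c` to
`x` on level `t`, the projection is `x ↦ p` and its inverse is `p ↦ x`. -/
theorem isProjectionDiffeo_of_charts (hf : ContDiff ℝ (n + 1) f) {c : ℝ}
    {F G : OpenPartialHomeomorph (E × ℝ) (E × ℝ)} (hF : ⇑F = endpointStartLevel f)
    (hG : ⇑G = startpointEndLevel f) (hF_symm : ContDiffOn ℝ n F.symm F.target)
    (hG_symm : ContDiffOn ℝ n G.symm G.target)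
    (hne : ∀ x, f x = t → (metricProjection {z | f z = c} x).Nonempty)
    (hproj : ∀ x, f x = t → ∀ y ∈ metricProjection {z | f z = c} x,
      ∃ s, (y, s) ∈ F.source ∩ G.source ∧ gradientStep f (y, s) = x)
    (hlevel : ∀ z, f z = c → ∃ s, (z, s) ∈ F.source ∩ G.source ∧ f (gradientStep f (z, s)) = t) :
    IsProjectionDiffeo n {x | f x = t} {z | f z = c} := by
  let P (x : E) : E := (F.symm (x, c)).1
  let Q (z : E) : E := gradientStep f (G.symm (z, t))
  have F_apply {p : E × ℝ} (hp : f p.1 = c) : F p = (gradientStep f p, c) := by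
    rw [hF, endpointStartLevel, hp]
  have G_apply {p : E × ℝ} (hp : f (gradientStep f p) = t) : G p = (p.1, t) := by
    rw [hG, startpointEndLevel, hp]
  have P_step {p : E × ℝ} (hp : p ∈ F.source) (hpc : f p.1 = c) : P (gradientStep f p) = p.1 := by
    simp only [P, ← F_apply hpc, F.left_inv hp]
  have Q_start {p : E × ℝ} (hp : p ∈ G.source) (hpt : f (gradientStep f p) = t) :
      Q p.1 = gradientStep f p := by
    simp only [Q, ← G_apply hpt, G.left_inv hp]
  have P_eq {x y : E} (hx : f x = t) (hy : y ∈ metricProjection {z | f z = c} x) :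
      P x = y ∧ Q y = x ∧ (x, c) ∈ F.target := by
    obtain ⟨s, ⟨hFs, hGs⟩, rfl⟩ := hproj x hx y hy
    exact ⟨P_step hFs hy.1, Q_start hGs hx, F_apply (p := (y, s)) hy.1 ▸ F.map_source hFs⟩
  have P_mem {x : E} (hx : f x = t) : P x ∈ metricProjection {z | f z = c} x :=
    let ⟨_, hy⟩ := hne x hx
    (P_eq hx hy).1.symm ▸ hy
  have Q_spec {z : E} (hz : f z = c) : f (Q z) = t ∧ P (Q z) = z ∧ (z, t) ∈ G.target := by
    obtain ⟨s, ⟨hFs, hGs⟩, hs⟩ := hlevel z hz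
    rw [Q_start hGs hs]
    exact ⟨hs, P_step hFs hz, G_apply hs ▸ G.map_source hGs⟩
  refine ⟨fun x hx => ⟨P x, P_mem hx, fun y hy => (P_eq hx hy).1.symm⟩,
    {x | (x, c) ∈ F.target}, {z | (z, t) ∈ G.target}, P, Q,
    F.open_target.preimage (by fun_prop), G.open_target.preimage (by fun_prop),
    fun x hx => (P_eq hx (P_mem hx)).2.2, fun z hz => (Q_spec hz).2.2, ?_, ?_,
    fun x hx => P_mem hx, ?_, fun x hx => (P_eq hx (P_mem hx)).2.1, fun z hz => (Q_spec hz).2.1⟩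
  · exact contDiff_fst.comp_contDiffOn
      (hF_symm.comp (contDiff_prodMk_left c).contDiffOn fun _ hx => hx)
  · exact (contDiff_gradientStep hf).comp_contDiffOn
      (hG_symm.comp (contDiff_prodMk_left t).contDiffOn fun _ hz => hz)
  · exact Subset.antisymm (image_subset_iff.2 fun x hx => (P_mem hx).1)
      fun z hz => ⟨Q z, (Q_spec hz).1, (Q_spec hz).2.1⟩

theorem projection_is_diffeomorphism_general (hn : n ≠ 0) (hf : ContDiff ℝ (n + 1) f) {b : ℝ}
    (htb : t < b) (hcomp : IsCompact (f ⁻¹' Icc t b)) (hreg : ∀ x, f x = t → ∇ f x ≠ 0) :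
    ∃ η₀ > 0, ∀ η : ℝ, 0 < η → η < η₀ →
      IsProjectionDiffeo n {x | f x = t} {z | f z = t + η} := by
  have level_isCompact {c : ℝ} (hc : c ∈ Icc t b) : IsCompact {x | f x = c} :=
    hcomp.of_isClosed_subset (isClosed_eq hf.continuous continuous_const)
      fun _ (hx : f _ = c) => mem_preimage.2 (hx ▸ hc)
  have hL := level_isCompact (left_mem_Icc.2 htb.le)
  obtain ⟨F, hLF, hF, hF_symm⟩ := exists_openPartialHomeomorph_endpointStartLevel hn hf hL hreg
  obtain ⟨G, hLG, hG, hG_symm⟩ := exists_openPartialHomeomorph_startpointEndLevel hn hf hL hreg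
  set W := F.source ∩ G.source
  have hW : IsOpen W := F.open_source.inter G.open_source
  have hLW {x : E} (hx : f x = t) : (x, 0) ∈ W := ⟨hLF ⟨hx, rfl⟩, hLG ⟨hx, rfl⟩⟩
  have hproj : ∀ᶠ c in 𝓝[≥] t, ∀ x ∈ {x | f x = t}, {z | f z = c}.Nonempty ∧
      ∀ y ∈ metricProjection {z | f z = c} x, ∃ s, (y, s) ∈ W ∧ gradientStep f (y, s) = x := by
    refine nhdsWithin_le_nhds (hL.eventually_forall_of_forall_eventually ?_)
    rintro x rfl
    exact eventually_exists_gradientStep_eq_of_mem_metricProjection (hf.of_le le_add_self)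
      (hreg x rfl) (hW.mem_nhds (hLW rfl))
  have hnear : ∀ᶠ c in 𝓝[≥] t, {z | f z = c} ⊆ {z | (z, t) ∈ G '' W} :=
    eventually_level_subset_of_isCompact_preimage_Icc hf.continuous htb hcomp
      ((G.isOpen_image_of_subset_source hW inter_subset_right).preimage (by fun_prop))
      fun x hx => ⟨(x, 0), hLW hx, by simpa [hG, startpointEndLevel] using hx⟩
  obtain ⟨u, htu, hu⟩ := mem_nhdsGE_iff_exists_Ico_subset.1
    ((hproj.and hnear).and (Icc_mem_nhdsGE htb))
  refine ⟨u - t, sub_pos.2 htu, fun η hη hηu => ?_⟩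
  obtain ⟨⟨hproj, hnear⟩, hc⟩ := hu ⟨le_add_of_nonneg_right hη.le, lt_sub_iff_add_lt'.1 hηu⟩
  refine isProjectionDiffeo_of_charts hf hF hG hF_symm hG_symm
    (fun x hx => metricProjection_nonempty_of_isCompact (level_isCompact hc) (hproj x hx).1 x)
    (fun x hx => (hproj x hx).2) fun z hz => ?_
  obtain ⟨⟨y, s⟩, hW, hGp⟩ := hnear hz
  rw [hG, startpointEndLevel, Prod.mk.injEq] at hGp
  obtain ⟨rfl, hst⟩ := hGp
  exact ⟨s, hW, hst⟩

end ProjectionDiffeo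

/-- If `L_t` is nonempty, compact, and free of critical points, then for all
sufficiently small `η > 0` the metric projection onto `L_{t+η}` is well-defined on `L_t`
and restricts to a diffeomorphism from `L_t` onto `L_{t+η}`: there are `C¹` maps `P`, `Q`
defined on open neighborhoods of `L_t` and `L_{t+η}`, with `P` realizing the metric
projection on `L_t`, mapping `L_t` onto `L_{t+η}`, and `Q` inverting `P`. -/
theorem projection_is_diffeomorphism {d : ℕ} (f : EuclideanSpace ℝ (Fin d) → ℝ)
    (hf : ContDiff ℝ 2 f) (hf_nonneg : ∀ x, 0 ≤ f x) (hf_int : ∫ x, f x = 1)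
    (t : ℝ) (ht : 0 < t) (ht_max : ∃ z, t < f z)
    (hne : {x : EuclideanSpace ℝ (Fin d) | f x = t}.Nonempty)
    (hcomp : IsCompact {x : EuclideanSpace ℝ (Fin d) | f x = t})
    (hreg : ∀ x, f x = t → gradient f x ≠ 0) :
    ∃ η₀ > 0, ∀ η : ℝ, 0 < η → η < η₀ →
      (∀ x ∈ {x : EuclideanSpace ℝ (Fin d) | f x = t},
        ∃! y, y ∈ {z : EuclideanSpace ℝ (Fin d) | f z = t + η} ∧
          dist x y = Metric.infDist x {z : EuclideanSpace ℝ (Fin d) | f z = t + η}) ∧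
      ∃ (U V : Set (EuclideanSpace ℝ (Fin d)))
        (P Q : EuclideanSpace ℝ (Fin d) → EuclideanSpace ℝ (Fin d)),
        IsOpen U ∧ IsOpen V ∧
        {x : EuclideanSpace ℝ (Fin d) | f x = t} ⊆ U ∧
        {z : EuclideanSpace ℝ (Fin d) | f z = t + η} ⊆ V ∧
        ContDiffOn ℝ 1 P U ∧ ContDiffOn ℝ 1 Q V ∧
        (∀ x, f x = t → P x ∈ {z : EuclideanSpace ℝ (Fin d) | f z = t + η} ∧
          dist x (P x) = Metric.infDist x {z : EuclideanSpace ℝ (Fin d) | f z = t + η}) ∧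
        P '' {x : EuclideanSpace ℝ (Fin d) | f x = t}
          = {z : EuclideanSpace ℝ (Fin d) | f z = t + η} ∧
        (∀ x, f x = t → Q (P x) = x) ∧
        (∀ z, f z = t + η → P (Q z) = z) := by
  have hint : Integrable f := .of_integral_ne_zero (hf_int ▸ one_ne_zero)
  have hsup : IsCompact {x | t ≤ f x} := isCompact_superlevel_of_isBounded_level hf.continuous
    hcomp.isBounded (hint.measure_ge_lt_top ht).ne
  have hslab : IsCompact (f ⁻¹' Icc t (t + 1)) :=
    hsup.of_isClosed_subset (isClosed_Icc.preimage hf.continuous) fun x hx => hx.1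
  exact projection_is_diffeomorphism_general one_ne_zero (by rwa [one_add_one_eq_two])
    (lt_add_one t) hslab hreg
end

section
/- Suppose f is twice continuously differentiable, t > 0, L_t is nonempty and compact, and there are no critical points of f on L_t (∇f(x) ≠ 0 for all x ∈ L_t). Then the level set L_t has positive reach. -/
open Metric Set Filter Topology MeasureTheory

/-!
If `y` and `z` both realise the distance from `x` to a level set of `f`, then `x` is equidistant
from them, so `‖z - y‖ ^ 2 = 2 * ⟪x - y, z - y⟫`. By Lagrange multipliers `x - y = c • ∇ f y`, and
since `f z = f y`, Taylor's formula makes `⟪∇ f y, z - y⟫` quadratically small, whence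
`‖z - y‖ ^ 2 ≤ 2 * |c| * C * ‖z - y‖ ^ 2`. As `|c| * ‖∇ f y‖ = dist x y`, this forces `z = y` as
soon as `2 * C * dist x y < ‖∇ f y‖`, which holds for all `x` near a regular point of the level
set. Thus nearest points are unique in a neighbourhood of the level set, and by compactness such a
neighbourhood contains a tube of positive radius.
-/

section NearestPoints

variable {X : Type*} [PseudoMetricSpace X] {A s : Set X} {p x y : X}

/-- The points of `A` nearest to `x`, i.e. the set-valued metric projection of `x` to `A`. -/
def nearestPoints (A : Set X) (x : X) : Set X :=
  {y | y ∈ A ∧ dist x y = infDist x A}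

/-- Positive reach in the sense of Federer: the metric projection to `A` is single-valued on some
open tube around `A`. Since `infDist x ∅ = 0`, the empty set does not have positive reach when
`X` is nonempty. -/
def HasPositiveReach (A : Set X) : Prop :=
  ∃ r > 0, ∀ x, infDist x A < r → ∃! y, y ∈ nearestPoints A x

theorem dist_le_two_mul_of_mem_nearestPoints (hp : p ∈ A) (hy : y ∈ nearestPoints A x) :
    dist y p ≤ 2 * dist x p := by
  have hxy : dist x y ≤ dist x p := hy.2.trans_le (infDist_le_dist_of_mem hp)
  linarith [dist_triangle_left y p x]

theorem eventually_nearestPoints_subset (hp : p ∈ A) (hs : s ∈ 𝓝 p) :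
    ∀ᶠ x in 𝓝 p, nearestPoints A x ⊆ s := by
  obtain ⟨ε, hε, hεs⟩ := Metric.mem_nhds_iff.1 hs
  filter_upwards [ball_mem_nhds p (half_pos hε)] with x hx y hy
  have hxp : dist x p < ε / 2 := hx
  exact hεs (mem_ball.2 (by linarith [dist_le_two_mul_of_mem_nearestPoints hp hy]))

theorem hasPositiveReach_of_eventually_subsingleton_nearestPoints (hA : IsCompact A)
    (hne : A.Nonempty)
    (hloc : ∀ p ∈ A, ∀ᶠ x in 𝓝 p, (nearestPoints A x).Subsingleton) :
    HasPositiveReach A := by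
  obtain ⟨r, hr, hrA⟩ := (hasBasis_nhdsSet_thickening hA).eventually_iff.1
    (eventually_nhdsSet_iff_forall.2 hloc)
  refine ⟨r, hr, fun x hx => ?_⟩
  obtain ⟨y, hyA, hxy⟩ := hA.exists_infDist_eq_dist hne x
  have hy : y ∈ nearestPoints A x := ⟨hyA, hxy.symm⟩
  exact ⟨y, hy, fun z hz => hrA ((mem_thickening_iff_infDist_lt hne).2 hx) hz hy⟩

end NearestPoints

section Taylor

variable {E F : Type*} [NormedAddCommGroup E] [NormedSpace ℝ E] [NormedAddCommGroup F]
  [NormedSpace ℝ F] {f : E → F}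

theorem norm_image_sub_sub_le_of_lipschitzOnWith_hasFDerivWithin {f' : E → E →L[ℝ] F} {s : Set E}
    {K : NNReal} {y z : E} (hs : Convex ℝ s) (hf : ∀ x ∈ s, HasFDerivWithinAt f (f' x) s x)
    (hK : LipschitzOnWith K f' s) (hy : y ∈ s) (hz : z ∈ s) :
    ‖f z - f y - f' y (z - y)‖ ≤ K * ‖z - y‖ ^ 2 := by
  have hseg : segment ℝ y z ⊆ s := hs.segment_subset hy hz
  have hbound : ∀ w ∈ segment ℝ y z, ‖f' w - f' y‖ ≤ K * ‖z - y‖ := fun w hw =>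
    (hK.norm_sub_le (hseg hw) hy).trans <| by
      gcongr
      exact norm_sub_le_of_mem_segment hw
  calc ‖f z - f y - f' y (z - y)‖ ≤ K * ‖z - y‖ * ‖z - y‖ :=
        (convex_segment y z).norm_image_sub_le_of_norm_hasFDerivWithin_le'
          (fun w hw => (hf w (hseg hw)).mono hseg) hbound
          (left_mem_segment ℝ y z) (right_mem_segment ℝ y z)
    _ = K * ‖z - y‖ ^ 2 := by ring

theorem isBigO_sub_sub_fderiv_of_contDiffAt_two {p : E} (hf : ContDiffAt ℝ 2 f p) :
    (fun q : E × E => f q.2 - f q.1 - fderiv ℝ f q.1 (q.2 - q.1))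
      =O[𝓝 (p, p)] fun q => ‖q.2 - q.1‖ ^ 2 := by
  obtain ⟨K, s, hs, hK⟩ := (hf.fderiv_right (m := 1) le_rfl).exists_lipschitzOnWith
  have hdiff : ∀ᶠ x in 𝓝 p, DifferentiableAt ℝ f x :=
    (hf.eventually (by simp)).mono fun x hx => hx.differentiableAt two_ne_zero
  obtain ⟨ε, hε, hball⟩ := Metric.mem_nhds_iff.1 (inter_mem hs hdiff)
  refine Asymptotics.IsBigO.of_bound K ?_
  filter_upwards [prod_mem_nhds (ball_mem_nhds p hε) (ball_mem_nhds p hε)] with ⟨y, z⟩ ⟨hy, hz⟩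
  rw [norm_pow, norm_norm]
  exact norm_image_sub_sub_le_of_lipschitzOnWith_hasFDerivWithin (convex_ball p ε)
    (fun x hx => (hball hx).2.hasFDerivAt.hasFDerivWithinAt)
    (hK.mono fun x hx => (hball hx).1) hy hz

end Taylor

theorem exists_eq_smul_of_isLocalExtrOn_levelSet {E : Type*} [NormedAddCommGroup E]
    [NormedSpace ℝ E] [CompleteSpace E] {f φ : E → ℝ} {f' φ' : StrongDual ℝ E} {x : E}
    (hextr : IsLocalExtrOn φ {w | f w = f x} x) (hf : HasStrictFDerivAt f f' x)
    (hφ : HasStrictFDerivAt φ φ' x) (hf' : f' ≠ 0) :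
    ∃ c : ℝ, φ' = c • f' := by
  obtain ⟨a, b, hab, h0⟩ := hextr.exists_multipliers_of_hasStrictFDerivAt_1d hf hφ
  have hb : b ≠ 0 := by
    rintro rfl
    have ha : a = 0 := by simpa [hf'] using h0
    exact hab (by rw [ha, Prod.mk_zero_zero])
  refine ⟨b⁻¹ * -a, ?_⟩
  rw [mul_smul, eq_inv_smul_iff₀ hb]
  linear_combination (norm := module) h0

section LevelSet

variable {E : Type*} [NormedAddCommGroup E] [InnerProductSpace ℝ E] {x y z : E}

theorem norm_sub_sq_eq_two_mul_inner_of_dist_eq (h : dist x z = dist x y) :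
    ‖z - y‖ ^ 2 = 2 * inner ℝ (x - y) (z - y) := by
  have hmem : x ∈ AffineSubspace.perpBisector y z :=
    AffineSubspace.mem_perpBisector_iff_dist_eq.2 h.symm
  have hinner := AffineSubspace.mem_perpBisector_iff_inner_eq.1 hmem
  rw [vsub_eq_sub, vsub_eq_sub, dist_comm, dist_eq_norm] at hinner
  linarith

theorem eq_of_dist_eq_of_innerSL_sub_eq_smul {φ : StrongDual ℝ E} {c C : ℝ}
    (hc : innerSL ℝ (x - y) = c • φ) (hφ : ‖φ (z - y)‖ ≤ C * ‖z - y‖ ^ 2)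
    (hxz : dist x z = dist x y) (hlt : 2 * C * dist x y < ‖φ‖) : z = y := by
  have hdist : dist x y = |c| * ‖φ‖ := by
    rw [dist_eq_norm, ← innerSL_apply_norm (𝕜 := ℝ), hc, norm_smul, Real.norm_eq_abs]
  have hsq : ‖z - y‖ ^ 2 ≤ 2 * (|c| * (C * ‖z - y‖ ^ 2)) :=
    calc ‖z - y‖ ^ 2 = 2 * (c * φ (z - y)) := by
          rw [norm_sub_sq_eq_two_mul_inner_of_dist_eq hxz, ← innerSL_apply_apply, hc,
            smul_apply, smul_eq_mul]
      _ ≤ 2 * (|c| * ‖φ (z - y)‖) := by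
          gcongr 2 * ?_
          exact (le_abs_self _).trans_eq (abs_mul c (φ (z - y)))
      _ ≤ 2 * (|c| * (C * ‖z - y‖ ^ 2)) := by gcongr
  have hmul : ‖φ‖ * ‖z - y‖ ^ 2 ≤ 2 * C * dist x y * ‖z - y‖ ^ 2 :=
    calc ‖φ‖ * ‖z - y‖ ^ 2 ≤ ‖φ‖ * (2 * (|c| * (C * ‖z - y‖ ^ 2))) := by gcongr
      _ = 2 * C * dist x y * ‖z - y‖ ^ 2 := by rw [hdist]; ring
  by_contra hzy
  have hpos : 0 < ‖z - y‖ ^ 2 := pow_pos (norm_pos_iff.2 (sub_ne_zero.2 hzy)) 2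
  exact (le_of_mul_le_mul_right hmul hpos).not_gt hlt

variable [CompleteSpace E] {f : E → ℝ} {t : ℝ}

theorem exists_innerSL_sub_eq_smul_of_mem_nearestPoints {f' : StrongDual ℝ E}
    (hf : HasStrictFDerivAt f f' y) (hf' : f' ≠ 0) (hy : y ∈ nearestPoints {w | f w = t} x) :
    ∃ c : ℝ, innerSL ℝ (x - y) = c • f' := by
  obtain ⟨rfl, hxy⟩ := hy
  have hmin : IsMinOn (fun w => ‖x - w‖ ^ 2) {w | f w = f y} y := fun w hw => by
    have hle : dist x y ≤ dist x w := hxy.trans_le (infDist_le_dist_of_mem hw)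
    rw [dist_eq_norm, dist_eq_norm] at hle
    exact pow_le_pow_left₀ (norm_nonneg _) hle 2
  have hsq : HasStrictFDerivAt (fun w => ‖x - w‖ ^ 2) (-(2 • innerSL ℝ (x - y))) y := by
    simpa using! (hasStrictFDerivAt_norm_sq (x - y)).comp y ((hasStrictFDerivAt_id y).const_sub x)
  obtain ⟨c, hc⟩ :=
    exists_eq_smul_of_isLocalExtrOn_levelSet (.inl hmin.localize) hf hsq hf'
  refine ⟨-c / 2, ?_⟩
  linear_combination (norm := module) (-(1 / 2 : ℝ)) • hc

theorem eventually_subsingleton_nearestPoints_levelSet {p : E} (hf : ContDiffAt ℝ 2 f p)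
    (hp : fderiv ℝ f p ≠ 0) :
    ∀ᶠ x in 𝓝 p, (nearestPoints {w | f w = f p} x).Subsingleton := by
  obtain ⟨C, hC⟩ := (isBigO_sub_sub_fderiv_of_contDiffAt_two hf).bound
  have hcont : ContinuousAt (fderiv ℝ f) p :=
    (hf.fderiv_right (m := 1) le_rfl).continuousAt
  have hsmall : ∀ᶠ q : E × E in 𝓝 (p, p), 2 * C * dist q.1 q.2 < ‖fderiv ℝ f q.2‖ :=
    ContinuousAt.eventually_lt (by fun_prop) (hcont.comp continuousAt_snd).norm
      (by simpa only [dist_self, mul_zero, norm_pos_iff] using hp)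
  obtain ⟨s, hs, hsP⟩ : ∃ s ∈ 𝓝 p, ∀ y ∈ s, ∀ z ∈ s,
      ‖f z - f y - fderiv ℝ f y (z - y)‖ ≤ C * ‖‖z - y‖ ^ 2‖ ∧
        2 * C * dist y z < ‖fderiv ℝ f z‖ := by
    rw [nhds_prod_eq] at hC hsmall
    exact eventually_prod_self_iff.1 (hC.and hsmall)
  have hregular : ∀ᶠ y in 𝓝 p, ContDiffAt ℝ 2 f y ∧ fderiv ℝ f y ≠ 0 :=
    (hf.eventually (by simp)).and (hcont.eventually_ne hp)
  have hmem : p ∈ {w | f w = f p} := rfl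
  filter_upwards [hs, eventually_nearestPoints_subset hmem (inter_mem hs hregular)]
    with x hx hsub z hz y hy
  obtain ⟨hys, hfy, hfy'⟩ := hsub hy
  have hlt : 2 * C * dist x y < ‖fderiv ℝ f y‖ := (hsP x hx y hys).2
  have hquad : ‖fderiv ℝ f y (z - y)‖ ≤ C * ‖z - y‖ ^ 2 := by
    have hfzy : f z = f y := hz.1.trans hy.1.symm
    simpa only [hfzy, sub_self, zero_sub, norm_neg, norm_pow, norm_norm] using
      (hsP y hys z (hsub hz).1).1
  obtain ⟨c, hc⟩ := exists_innerSL_sub_eq_smul_of_mem_nearestPoints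
    (hfy.hasStrictFDerivAt two_ne_zero) hfy' hy
  exact eq_of_dist_eq_of_innerSL_sub_eq_smul hc hquad (hz.2.trans hy.2.symm) hlt

theorem level_set_positive_reach_general (hf : ∀ x, f x = t → ContDiffAt ℝ 2 f x)
    (hne : {x | f x = t}.Nonempty) (hcomp : IsCompact {x | f x = t})
    (hreg : ∀ x, f x = t → gradient f x ≠ 0) :
    HasPositiveReach {x | f x = t} := by
  refine hasPositiveReach_of_eventually_subsingleton_nearestPoints hcomp hne ?_
  rintro p rfl
  have hp : fderiv ℝ f p ≠ 0 := fun h0 => hreg p rfl (by rw [gradient, h0, map_zero])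
  exact eventually_subsingleton_nearestPoints_levelSet (hf p rfl) hp

end LevelSet

/-- consequence of Federer, Lem 4.11: If `f` is twice continuously
differentiable, `L_t` is nonempty and compact, and there are no critical points on `L_t`,
then `L_t` has positive reach: there is `r > 0` such that every point within distance `r`
of `L_t` has a unique nearest point in `L_t`. -/
theorem level_set_positive_reach {d : ℕ} (f : EuclideanSpace ℝ (Fin d) → ℝ)
    (hf : ContDiff ℝ 2 f) (hf_nonneg : ∀ x, 0 ≤ f x) (hf_int : ∫ x, f x = 1)
    (t : ℝ) (ht : 0 < t)
    (hne : {x : EuclideanSpace ℝ (Fin d) | f x = t}.Nonempty)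
    (hcomp : IsCompact {x : EuclideanSpace ℝ (Fin d) | f x = t})
    (hreg : ∀ x, f x = t → gradient f x ≠ 0) :
    ∃ r > 0, ∀ x : EuclideanSpace ℝ (Fin d),
      Metric.infDist x {z : EuclideanSpace ℝ (Fin d) | f z = t} < r →
        ∃! y, y ∈ {z : EuclideanSpace ℝ (Fin d) | f z = t} ∧
          dist x y = Metric.infDist x {z : EuclideanSpace ℝ (Fin d) | f z = t} :=
  level_set_positive_reach_general (fun _ _ => hf.contDiffAt) hne hcomp hreg
end

section
/- Suppose t ∈ (0, max f), the level set L_t is nonempty and compact, and ∇f(x) ≠ 0 for all x ∈ L_t. Let p₀ := min{‖∇f(x)‖ : x ∈ L_t} > 0. Then for all sufficiently small η > 0, every point of L_t is within distance 2η/p₀ of L_{t+η}, i.e., the one-sided Hausdorff distance satisfies d_H(L_t | L_{t+η}) := sup_{a ∈ L_t} dist(a, L_{t+η}) ≤ 2η/p₀; in particular the Hausdorff distance d_H(L_t, L_{t+η}) → 0 as η → 0⁺. -/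
open Metric Set Filter Topology MeasureTheory

/-!
Near a compact set on which `‖Df‖ ≥ p`, uniform continuity of `Df` and the mean value inequality
make `f` climb at any prescribed rate `c < p` along a suitable short segment, so the intermediate
value theorem finds a point of `L_{t+η}` within `η / c` of each point of `L_t`; the bound `2η / p₀`
is the case `c = p₀ / 2`.

Conversely, if `f x > t` at a point `x` outside a ball containing `L_t`, then `x` lies in a
half-space that misses `L_t`. Half-spaces are connected, so `f > t` on all of it, which is
impossible because `{f > t}` has finite measure and a half-space does not. Hence `{f > t}` is
bounded, and by compactness its points at which `f` is close to `t` are close to `L_t`.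
-/

section Measure

variable {E : Type*} [NormedAddCommGroup E] [NormedSpace ℝ E] [FiniteDimensional ℝ E]
  [MeasurableSpace E] [BorelSpace E] {μ : Measure E} [μ.IsAddHaarMeasure]

lemma measure_eq_top_of_forall_exists_ball_subset [Nontrivial E] {s : Set E}
    (hs : ∀ n : ℕ, ∃ c, ball c n ⊆ s) : μ s = ⊤ := by
  have : NoncompactSpace E := NormedSpace.noncompactSpace ℝ E
  have hball_le (n : ℕ) : μ (ball 0 n) ≤ μ s := by
    obtain ⟨c, hc⟩ := hs n
    exact (Measure.addHaar_ball_center μ c n).symm.trans_le (measure_mono hc)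
  have hmono : Monotone fun n : ℕ => ball (0 : E) n := fun _ _ hmn =>
    ball_subset_ball (Nat.cast_le.2 hmn)
  rw [← top_le_iff, ← measure_univ_of_isAddLeftInvariant μ, ← iUnion_ball_nat (0 : E),
    hmono.measure_iUnion]
  exact iSup_le hball_le

lemma measure_halfSpace_gt_eq_top {g : StrongDual ℝ E} (hg : g ≠ 0) (r : ℝ) :
    μ {x | r < g x} = ⊤ := by
  obtain ⟨v, hv⟩ := DFunLike.ne_iff.1 hg
  have : Nontrivial E := nontrivial_of_ne v 0 fun h => hv (by simp [h])
  refine measure_eq_top_of_forall_exists_ball_subset fun n => ?_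
  obtain ⟨c, hc : g c = r + ‖g‖ * n⟩ :=
    g.toLinearMap.surjective (fun h => hv (LinearMap.congr_fun h v)) (r + ‖g‖ * n)
  refine ⟨c, fun x hx => ?_⟩
  have hgpos : 0 < ‖g‖ := norm_pos_iff.2 hg
  have hlt : g (c - x) < ‖g‖ * n := calc
    g (c - x) ≤ ‖g‖ * ‖c - x‖ := (le_abs_self _).trans (g.le_opNorm _)
    _ < ‖g‖ * n := mul_lt_mul_of_pos_left (mem_ball_iff_norm'.1 hx) hgpos
  rw [map_sub, hc] at hlt
  change r < g x
  linarith

lemma isBounded_superlevel_of_isBounded_level {f : E → ℝ} (hf : Continuous f) {t : ℝ}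
    (hfin : μ {x | t < f x} ≠ ⊤) (hL : Bornology.IsBounded {x | f x = t}) :
    Bornology.IsBounded {x | t < f x} := by
  obtain ⟨R, hR, hLR⟩ := hL.exists_pos_norm_le
  refine isBounded_iff_forall_norm_le.2 ⟨R, fun x hx => ?_⟩
  by_contra! hRx
  obtain ⟨g, hg, hgx⟩ := exists_dual_vector ℝ x (hR.trans hRx).ne'
  have hconv : Convex ℝ {y | R < g y} := convex_halfSpace_gt g.toLinearMap.isLinear R
  have hxH : x ∈ {y | R < g y} := hRx.trans_eq hgx.symm
  have hne_t : ∀ y, R < g y → f y ≠ t := fun y hy hyt =>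
    (hy.trans_le ((le_abs_self _).trans (g.le_of_opNorm_le hg.le y))).not_ge
      (by simpa using hLR y hyt)
  have hsub : {y | R < g y} ⊆ {y | t < f y} := by
    intro y hy
    by_contra hyt
    obtain ⟨z, hz, hzt⟩ := hconv.isPreconnected.intermediate_value hy hxH hf.continuousOn
      ⟨not_lt.1 hyt, le_of_lt hx⟩
    exact hne_t z hz hzt
  have hg0 : g ≠ 0 := by rintro rfl; simp at hg
  exact hfin (measure_mono_top hsub (measure_halfSpace_gt_eq_top hg0 R))

end Measure

section Ascent

variable {E : Type*} [NormedAddCommGroup E] [NormedSpace ℝ E] {f : E → ℝ} {c : ℝ}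

lemma exists_lt_apply_of_lt_norm {g : StrongDual ℝ E} {r : ℝ} (hr : r < ‖g‖) :
    ∃ v, ‖v‖ < 1 ∧ r < g v := by
  obtain ⟨v, hv, hrv⟩ := g.exists_lt_apply_of_lt_opNorm hr
  obtain h | h := lt_abs.1 hrv
  · exact ⟨v, hv, h⟩
  · exact ⟨-v, by rwa [norm_neg], by rwa [map_neg]⟩

lemma exists_mem_closedBall_eq_add_mul {a : E} {ε s : ℝ} (hs : 0 ≤ s)
    (hf : ∀ x ∈ closedBall a s, DifferentiableAt ℝ f x)
    (hosc : ∀ x ∈ closedBall a s, ‖fderiv ℝ f x - fderiv ℝ f a‖ ≤ ε)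
    (hc : 0 ≤ c) (hcε : c + ε < ‖fderiv ℝ f a‖) :
    ∃ z ∈ closedBall a s, f z = f a + c * s := by
  have haB : a ∈ closedBall a s := mem_closedBall_self hs
  have hε : 0 ≤ ε := (norm_nonneg _).trans (hosc a haB)
  obtain ⟨v, hv, hfv⟩ := exists_lt_apply_of_lt_norm hcε
  have hnorm : ‖s • v‖ ≤ s := by
    rw [norm_smul, Real.norm_of_nonneg hs]
    exact mul_le_of_le_one_right hs hv.le
  have hbB : a + s • v ∈ closedBall a s := by simpa using hnorm
  have hmean : |f (a + s • v) - f a - s * fderiv ℝ f a v| ≤ ε * s := by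
    have hball := (convex_closedBall a s).norm_image_sub_le_of_norm_fderiv_le' hf hosc haB hbB
    rw [add_sub_cancel_left, map_smul, smul_eq_mul, Real.norm_eq_abs] at hball
    exact hball.trans (mul_le_mul_of_nonneg_left hnorm hε)
  have hrise : f a + c * s ≤ f (a + s • v) := by
    have hslope : s * (c + ε) ≤ s * fderiv ℝ f a v := mul_le_mul_of_nonneg_left hfv.le hs
    linarith [(abs_le.1 hmean).1]
  exact (convex_closedBall a s).isPreconnected.intermediate_value haB hbB
    (fun x hx => (hf x hx).continuousAt.continuousWithinAt)
    ⟨le_add_of_nonneg_right (mul_nonneg hc hs), hrise⟩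

lemma exists_pos_forall_exists_eq_add_dist_le_div {K : Set E} (hf : ContDiff ℝ 1 f)
    (hK : IsCompact K) {p : ℝ} (hp : ∀ a ∈ K, p ≤ ‖fderiv ℝ f a‖) (hc : 0 < c) (hcp : c < p) :
    ∃ η₀ > 0, ∀ η, 0 ≤ η → η < η₀ → ∀ a ∈ K, ∃ z, f z = f a + η ∧ dist a z ≤ η / c := by
  have hfd : Continuous (fderiv ℝ f) := hf.continuous_fderiv one_ne_zero
  obtain ⟨δ, hδ, hclose⟩ := mem_uniformity_dist.1 <|
    hK.uniformContinuousAt_of_continuousAt (fderiv ℝ f) (fun _ _ => hfd.continuousAt)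
      (dist_mem_uniformity (half_pos (sub_pos.2 hcp)))
  refine ⟨δ * c, mul_pos hδ hc, fun η hη hηδ a ha => ?_⟩
  have hosc : ∀ x ∈ closedBall a (η / c), ‖fderiv ℝ f x - fderiv ℝ f a‖ ≤ (p - c) / 2 := by
    intro x hx
    have hax : dist a x < δ := (mem_closedBall'.1 hx).trans_lt ((div_lt_iff₀ hc).2 hηδ)
    rw [← dist_eq_norm']
    exact (hclose hax ha).le
  obtain ⟨z, hz, hfz⟩ := exists_mem_closedBall_eq_add_mul (div_nonneg hη hc.le)
    (fun x _ => hf.differentiable one_ne_zero x) hosc hc.le (by linarith [hp a ha])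
  exact ⟨z, by rwa [mul_div_cancel₀ _ hc.ne'] at hfz, mem_closedBall'.1 hz⟩

end Ascent

lemma eventually_forall_mem_of_isCompact {X Y : Type*} [TopologicalSpace X] [TopologicalSpace Y]
    [T2Space Y] {f : X → Y} {K U : Set X} {y₀ : Y} (hK : IsCompact K) (hf : ContinuousOn f K)
    (hU : IsOpen U) (h : ∀ x ∈ K, f x = y₀ → x ∈ U) : ∀ᶠ y in 𝓝 y₀, ∀ x ∈ K, f x = y → x ∈ U := by
  have hclosed : IsClosed (f '' (K \ U)) :=
    ((hK.diff hU).image_of_continuousOn (hf.mono sdiff_subset)).isClosed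
  have hy₀ : y₀ ∉ f '' (K \ U) := fun ⟨x, hx, hxy⟩ => hx.2 (h x hx.1 hxy)
  filter_upwards [hclosed.isOpen_compl.mem_nhds hy₀] with y hy x hxK hxy
  by_contra hxU
  exact hy ⟨x, ⟨hxK, hxU⟩, hxy⟩

lemma tendsto_hausdorffDist_zero {ι X : Type*} [PseudoMetricSpace X] {l : Filter ι} {A : Set X}
    {B : ι → Set X} (hAB : ∀ ε > 0, ∀ᶠ i in l, ∀ a ∈ A, infDist a (B i) ≤ ε)
    (hBA : ∀ ε > 0, ∀ᶠ i in l, ∀ b ∈ B i, infDist b A ≤ ε) :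
    Tendsto (fun i => hausdorffDist A (B i)) l (𝓝 0) := by
  refine (nhds_basis_closedBall.tendsto_right_iff).2 fun ε hε => ?_
  filter_upwards [hAB ε hε, hBA ε hε] with i hAi hBi
  rw [mem_closedBall_zero_iff, Real.norm_of_nonneg hausdorffDist_nonneg]
  exact hausdorffDist_le_of_infDist hε.le hAi hBi

lemma eventually_forall_infDist_level_le {X Y : Type*} [PseudoMetricSpace X] [ProperSpace X]
    [TopologicalSpace Y] [T2Space Y] [Preorder Y] {f : X → Y} {t : Y} (hf : Continuous f)
    (hne : {x | f x = t}.Nonempty)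
    (hbdd : Bornology.IsBounded {x | t < f x}) {ε : ℝ} (hε : 0 < ε) :
    ∀ᶠ s in 𝓝[>] t, ∀ z, f z = s → infDist z {x | f x = t} ≤ ε := by
  have h := eventually_forall_mem_of_isCompact (U := thickening ε {x | f x = t})
    hbdd.isCompact_closure hf.continuousOn isOpen_thickening
    fun x _ hx => self_subset_thickening hε _ hx
  filter_upwards [nhdsWithin_le_nhds h, self_mem_nhdsWithin] with s hs hts z hzs
  have hz : t < f z := hzs ▸ hts
  exact ((mem_thickening_iff_infDist_lt hne).1 (hs z (subset_closure hz) hzs)).le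

lemma tendsto_const_add_nhdsGT_zero {M : Type*} [AddZeroClass M] [TopologicalSpace M]
    [SeparatelyContinuousAdd M] [Preorder M] [AddLeftStrictMono M] (t : M) :
    Tendsto (fun η => t + η) (𝓝[>] 0) (𝓝[>] t) := by
  refine tendsto_nhdsWithin_iff.2 ⟨Tendsto.mono_left
    ((continuous_const_add t).tendsto' _ _ (add_zero t)) nhdsWithin_le_nhds, ?_⟩
  filter_upwards [self_mem_nhdsWithin] with η hη using lt_add_of_pos_right t hη

lemma norm_gradient_eq_norm_fderiv {𝕜 E : Type*} [RCLike 𝕜] [NormedAddCommGroup E]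
    [InnerProductSpace 𝕜 E] [CompleteSpace E] (f : E → 𝕜) (x : E) :
    ‖gradient f x‖ = ‖fderiv 𝕜 f x‖ := by
  rw [← toDual_gradient, LinearIsometryEquiv.norm_map]

theorem level_sets_hausdorff_close_general {E : Type*} [NormedAddCommGroup E] [NormedSpace ℝ E]
    [FiniteDimensional ℝ E] [MeasurableSpace E] [BorelSpace E] {μ : Measure E}
    [μ.IsAddHaarMeasure] {f : E → ℝ} (hf : ContDiff ℝ 1 f) {t : ℝ} (hfin : μ {x | t < f x} ≠ ⊤)
    (hne : {x | f x = t}.Nonempty) (hcomp : IsCompact {x | f x = t})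
    (hreg : ∀ x, f x = t → fderiv ℝ f x ≠ 0) {p₀ : ℝ}
    (hp₀ : p₀ = sInf ((fun x => ‖fderiv ℝ f x‖) '' {x | f x = t})) :
    0 < p₀ ∧
    (∃ η₀ > 0, ∀ η : ℝ, 0 < η → η < η₀ →
      ∀ a ∈ {x | f x = t}, infDist a {z | f z = t + η} ≤ 2 * η / p₀) ∧
    Tendsto (fun η : ℝ => hausdorffDist {x | f x = t} {z | f z = t + η}) (𝓝[>] 0) (𝓝 0) := by
  have hmin : IsLeast ((fun x => ‖fderiv ℝ f x‖) '' {x | f x = t}) p₀ :=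
    hp₀ ▸ (hcomp.image (hf.continuous_fderiv one_ne_zero).norm).isLeast_sInf (hne.image _)
  have hpos : 0 < p₀ := by
    obtain ⟨x, hx, hxp⟩ := hmin.1
    exact hxp ▸ norm_pos_iff.2 (hreg x hx)
  obtain ⟨η₀, hη₀, hclimb⟩ := exists_pos_forall_exists_eq_add_dist_le_div hf hcomp
    (fun a ha => hmin.2 ⟨a, ha, rfl⟩) (half_pos hpos) (half_lt_self hpos)
  have hnear : ∀ η, 0 < η → η < η₀ → ∀ a ∈ {x | f x = t},
      infDist a {z | f z = t + η} ≤ 2 * η / p₀ := by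
    intro η hη hηη₀ a (ha : f a = t)
    obtain ⟨z, hz, haz⟩ := hclimb η hη.le hηη₀ a ha
    rw [ha] at hz
    calc infDist a {z | f z = t + η} ≤ dist a z := infDist_le_dist_of_mem hz
      _ ≤ η / (p₀ / 2) := haz
      _ = 2 * η / p₀ := by rw [div_div_eq_mul_div, mul_comm]
  refine ⟨hpos, ⟨η₀, hη₀, hnear⟩, tendsto_hausdorffDist_zero (fun ε hε => ?_) fun ε hε => ?_⟩
  · have hsmall : Tendsto (fun η => 2 * η / p₀) (𝓝[>] 0) (𝓝 0) :=
      Tendsto.mono_left (Continuous.tendsto' (by fun_prop) _ _ (by simp)) nhdsWithin_le_nhds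
    filter_upwards [Ioo_mem_nhdsGT hη₀, hsmall.eventually_le_const hε] with η hη hηε a ha
    exact (hnear η hη.1 hη.2 a ha).trans hηε
  · exact (tendsto_const_add_nhdsGT_zero t).eventually <|
      eventually_forall_infDist_level_le hf.continuous hne
        (isBounded_superlevel_of_isBounded_level hf.continuous hfin hcomp.isBounded) hε

/-- If `L_t` is nonempty, compact and free of critical points, then
`p₀ := min{‖∇f(x)‖ : x ∈ L_t}` is positive, for all sufficiently small `η > 0` every
point of `L_t` is within distance `2η/p₀` of `L_{t+η}` (one-sided Hausdorff bound), and
the Hausdorff distance `d_H(L_t, L_{t+η})` tends to `0` as `η → 0⁺`. -/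
theorem level_sets_hausdorff_close {d : ℕ} (f : EuclideanSpace ℝ (Fin d) → ℝ)
    (hf : ContDiff ℝ 2 f) (hf_nonneg : ∀ x, 0 ≤ f x) (hf_int : ∫ x, f x = 1)
    (t : ℝ) (ht : 0 < t) (ht_max : ∃ z, t < f z)
    (hne : {x : EuclideanSpace ℝ (Fin d) | f x = t}.Nonempty)
    (hcomp : IsCompact {x : EuclideanSpace ℝ (Fin d) | f x = t})
    (hreg : ∀ x, f x = t → gradient f x ≠ 0)
    (p₀ : ℝ)
    (hp₀ : p₀ = sInf ((fun x => ‖gradient f x‖) ''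
      {x : EuclideanSpace ℝ (Fin d) | f x = t})) :
    0 < p₀ ∧
    (∃ η₀ > 0, ∀ η : ℝ, 0 < η → η < η₀ →
      ∀ a ∈ {x : EuclideanSpace ℝ (Fin d) | f x = t},
        Metric.infDist a {z : EuclideanSpace ℝ (Fin d) | f z = t + η} ≤ 2 * η / p₀) ∧
    Tendsto (fun η : ℝ =>
        Metric.hausdorffDist {x : EuclideanSpace ℝ (Fin d) | f x = t}
          {z : EuclideanSpace ℝ (Fin d) | f z = t + η})
      (𝓝[>] (0 : ℝ)) (𝓝 0) := by
  have hfi : Integrable f := .of_integral_ne_zero (hf_int ▸ one_ne_zero)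
  exact level_sets_hausdorff_close_general (hf.of_le one_le_two) (hfi.measure_gt_lt_top ht).ne hne
    hcomp (fun x hx h => hreg x hx (by simp [gradient, h]))
    (by simpa only [norm_gradient_eq_norm_fderiv] using hp₀)
end

section
/- Let 0 < t < s < max f and suppose ∇f(y) ≠ 0 for every y with f(y) ∈ [t, s]. Define ψ(x) := ζ_x(s − t) for x ∈ L_t and ψ↓(z) := ζ↓_z(s − t) for z ∈ L_s, where ζ↓ is the reversed (gradient descent) flow. Then ψ↓(z) ∈ L_t for every z ∈ L_s, and the descent flow inverts the ascent flow: ψ↓(ψ(x)) = x for all x ∈ L_t and ψ(ψ↓(z)) = z for all z ∈ L_s. -/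
open Metric Set Filter Topology MeasureTheory
open scoped Classical

/-- The normalized gradient ascent vector field `∇f/‖∇f‖²` (extended by `0` at critical
points) driving the ascent flow `ζ`. -/
noncomputable def ascentField {d : ℕ} (f : EuclideanSpace ℝ (Fin d) → ℝ)
    (y : EuclideanSpace ℝ (Fin d)) : EuclideanSpace ℝ (Fin d) :=
  if gradient f y = 0 then 0 else (‖gradient f y‖ ^ 2)⁻¹ • gradient f y

/-- The normalized gradient descent vector field `−∇f/‖∇f‖²` (extended by `0` at critical
points) driving the descent flow `ζ↓`. -/
noncomputable def descentField {d : ℕ} (f : EuclideanSpace ℝ (Fin d) → ℝ)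
    (y : EuclideanSpace ℝ (Fin d)) : EuclideanSpace ℝ (Fin d) :=
  if gradient f y = 0 then 0 else -((‖gradient f y‖ ^ 2)⁻¹ • gradient f y)

/-!
Along a curve driven by `∇f/‖∇f‖²` the level `f` has derivative `⟪∇f, ∇f/‖∇f‖²⟫`, which is `1` at
regular points and `0` at critical ones. The level therefore rises at speed at most one, so on a
time interval of length `s - t` a curve starting at level `t`, or ending at level `s`, stays in the
band `[t, s]`; there are no critical points there, so the speed is exactly one. A descent curve run
backwards is an ascent curve, and ascent curves agreeing at one end agree throughout, because the
field is locally Lipschitz away from critical points.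
-/

open scoped Gradient InnerProductSpace

section IntegralCurve

variable {E : Type*} [NormedAddCommGroup E] [NormedSpace ℝ E]

lemma isIntegralCurveOn_comp_const_sub {γ : ℝ → E} {v : ℝ → E → E} {I : Set ℝ}
    (hγ : IsIntegralCurveOn γ v I) (c : ℝ) :
    IsIntegralCurveOn (fun τ ↦ γ (c - τ)) (fun τ ↦ -v (c - τ)) ((c - ·) ⁻¹' I) := by
  intro τ hτ
  have hderiv := (hγ (c - τ) hτ).scomp τ ((hasDerivAt_id τ).const_sub c).hasDerivWithinAt
    (mapsTo_preimage _ _)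
  rwa [neg_one_smul] at hderiv

lemma isIntegralCurveOn_eqOn_Icc_of_lipschitzOnWith {v : ℝ → E → E} {u : Set E} {K : NNReal}
    {α β : ℝ → E} {a b τ₀ : ℝ} (hv : ∀ τ ∈ Icc a b, LipschitzOnWith K (v τ) u)
    (hα : IsIntegralCurveOn α v (Icc a b)) (hαu : MapsTo α (Icc a b) u)
    (hβ : IsIntegralCurveOn β v (Icc a b)) (hβu : MapsTo β (Icc a b) u)
    (hτ₀ : τ₀ ∈ Icc a b) (heq : α τ₀ = β τ₀) : EqOn α β (Icc a b) := by
  have hleft : Icc a τ₀ ⊆ Icc a b := Icc_subset_Icc_right hτ₀.2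
  have hright : Icc τ₀ b ⊆ Icc a b := Icc_subset_Icc_left hτ₀.1
  have hleft' : Ioc a τ₀ ⊆ Icc a b := Ioc_subset_Icc_self.trans hleft
  have hright' : Ico τ₀ b ⊆ Icc a b := Ico_subset_Icc_self.trans hright
  have deriv_left {γ : ℝ → E} (hγ : IsIntegralCurveOn γ v (Icc a b)) :
      ∀ τ ∈ Ioc a τ₀, HasDerivWithinAt γ (v τ (γ τ)) (Iic τ) τ := fun τ hτ ↦
    (hγ τ (hleft' hτ)).mono_of_mem_nhdsWithin
      (mem_of_superset (Icc_mem_nhdsLE hτ.1) (Icc_subset_Icc_right (hleft' hτ).2))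
  have deriv_right {γ : ℝ → E} (hγ : IsIntegralCurveOn γ v (Icc a b)) :
      ∀ τ ∈ Ico τ₀ b, HasDerivWithinAt γ (v τ (γ τ)) (Ici τ) τ := fun τ hτ ↦
    (hγ τ (hright' hτ)).mono_of_mem_nhdsWithin
      (mem_of_superset (Icc_mem_nhdsGE hτ.2) (Icc_subset_Icc_left (hright' hτ).1))
  rw [← Icc_union_Icc_eq_Icc hτ₀.1 hτ₀.2]
  refine EqOn.union ?_ ?_
  · exact ODE_solution_unique_of_mem_Icc_left (s := fun _ ↦ u) (fun τ hτ ↦ hv τ (hleft' hτ))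
      (hα.continuousOn.mono hleft) (deriv_left hα) (fun _ hτ ↦ hαu (hleft' hτ))
      (hβ.continuousOn.mono hleft) (deriv_left hβ) (fun _ hτ ↦ hβu (hleft' hτ)) heq
  · exact ODE_solution_unique_of_mem_Icc_right (s := fun _ ↦ u) (fun τ hτ ↦ hv τ (hright' hτ))
      (hα.continuousOn.mono hright) (deriv_right hα) (fun _ hτ ↦ hαu (hright' hτ))
      (hβ.continuousOn.mono hright) (deriv_right hβ) (fun _ hτ ↦ hβu (hright' hτ)) heq

lemma isIntegralCurveOn_eqOn_Icc_of_locallyLipschitzOn {v : E → E} {u : Set E} {α β : ℝ → E}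
    {a b τ₀ : ℝ} (hv : LocallyLipschitzOn u v)
    (hα : IsIntegralCurveOn α (fun _ ↦ v) (Icc a b)) (hαu : MapsTo α (Icc a b) u)
    (hβ : IsIntegralCurveOn β (fun _ ↦ v) (Icc a b)) (hβu : MapsTo β (Icc a b) u)
    (hτ₀ : τ₀ ∈ Icc a b) (heq : α τ₀ = β τ₀) : EqOn α β (Icc a b) := by
  have hcompact : IsCompact (α '' Icc a b ∪ β '' Icc a b) :=
    (isCompact_Icc.image_of_continuousOn hα.continuousOn).union
      (isCompact_Icc.image_of_continuousOn hβ.continuousOn)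
  have hsub : α '' Icc a b ∪ β '' Icc a b ⊆ u :=
    union_subset hαu.image_subset hβu.image_subset
  obtain ⟨K, hK⟩ := (hv.mono hsub).exists_lipschitzOnWith_of_compact hcompact
  exact isIntegralCurveOn_eqOn_Icc_of_lipschitzOnWith (fun _ _ ↦ hK)
    hα ((mapsTo_image α _).mono_right subset_union_left)
    hβ ((mapsTo_image β _).mono_right subset_union_right) hτ₀ heq

end IntegralCurve

section NormalizedGradient

variable {E : Type*} [NormedAddCommGroup E] [InnerProductSpace ℝ E] [CompleteSpace E]
  {f : E → ℝ} {a b c τ₀ : ℝ}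

/-- The normalized gradient `∇f/‖∇f‖²`, the vector field along which `f` grows at unit speed. At
critical points the convention `0⁻¹ = 0` makes it vanish. -/
noncomputable def normalizedGradient (f : E → ℝ) (y : E) : E :=
  (‖∇ f y‖ ^ 2)⁻¹ • ∇ f y

lemma inner_gradient_normalizedGradient {y : E} (hy : ∇ f y ≠ 0) :
    ⟪∇ f y, normalizedGradient f y⟫_ℝ = 1 := by
  rw [normalizedGradient, real_inner_smul_right, real_inner_self_eq_norm_sq]
  exact inv_mul_cancel₀ (pow_ne_zero 2 (norm_ne_zero_iff.2 hy))

lemma inner_gradient_normalizedGradient_mem_Icc (f : E → ℝ) (y : E) :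
    ⟪∇ f y, normalizedGradient f y⟫_ℝ ∈ Icc (0 : ℝ) 1 := by
  by_cases hy : ∇ f y = 0
  · rw [hy, inner_zero_left]
    exact left_mem_Icc.2 zero_le_one
  · rw [inner_gradient_normalizedGradient hy]
    exact right_mem_Icc.2 zero_le_one

lemma contDiffAt_normalizedGradient {n : WithTop ℕ∞} {y : E} (hf : ContDiffAt ℝ (n + 1) f y)
    (hy : ∇ f y ≠ 0) : ContDiffAt ℝ n (normalizedGradient f) y := by
  have hgrad : ContDiffAt ℝ n (∇ f) y :=
    (InnerProductSpace.toDual ℝ E).symm.contDiff.contDiffAt.comp y hf.fderiv_right_succ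
  exact ((hgrad.norm_sq ℝ).inv (pow_ne_zero 2 (norm_ne_zero_iff.2 hy))).smul hgrad

lemma locallyLipschitzOn_normalizedGradient (hf : ContDiff ℝ 2 f) :
    LocallyLipschitzOn {y | ∇ f y ≠ 0} (normalizedGradient f) := by
  intro y hy
  have hC1 : ContDiffAt ℝ 1 (normalizedGradient f) y :=
    contDiffAt_normalizedGradient (by simpa only [one_add_one_eq_two] using hf.contDiffAt) hy
  obtain ⟨K, w, hw, hK⟩ := hC1.exists_lipschitzOnWith
  exact ⟨K, w, mem_nhdsWithin_of_mem_nhds hw, hK⟩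

lemma exists_sub_eq_inner_gradient_mul {γ : ℝ → E} {v : ℝ → E → E} (hf : Differentiable ℝ f)
    (hγ : IsIntegralCurveOn γ v (Icc a b)) (hab : a ≤ b) :
    ∃ τ ∈ Icc a b, f (γ b) - f (γ a) = ⟪∇ f (γ τ), v τ (γ τ)⟫_ℝ * (b - a) := by
  rcases hab.eq_or_lt with rfl | hlt
  · exact ⟨a, left_mem_Icc.2 le_rfl, by simp only [sub_self, mul_zero]⟩
  have hderiv : ∀ τ ∈ Ioo a b, HasDerivAt (f ∘ γ) ⟪∇ f (γ τ), v τ (γ τ)⟫_ℝ τ := fun τ hτ ↦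
    (hf (γ τ)).hasGradientAt.hasFDerivAt.comp_hasDerivAt τ
      ((hγ τ (Ioo_subset_Icc_self hτ)).hasDerivAt (Icc_mem_nhds hτ.1 hτ.2))
  obtain ⟨τ, hτ, hslope⟩ := exists_hasDerivAt_eq_slope (f ∘ γ) _ hlt
    (hf.continuous.comp_continuousOn hγ.continuousOn) hderiv
  exact ⟨τ, Ioo_subset_Icc_self hτ, ((eq_div_iff (sub_pos.2 hlt).ne').1 hslope).symm⟩

variable {γ α β : ℝ → E}

lemma level_sub_level_mem_Icc (hf : Differentiable ℝ f)
    (hγ : IsIntegralCurveOn γ (fun _ ↦ normalizedGradient f) (Icc a b)) (hab : a ≤ b) :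
    f (γ b) - f (γ a) ∈ Icc 0 (b - a) := by
  obtain ⟨τ, -, hτ⟩ := exists_sub_eq_inner_gradient_mul hf hγ hab
  obtain ⟨hnonneg, hle_one⟩ := inner_gradient_normalizedGradient_mem_Icc f (γ τ)
  rw [hτ]
  exact ⟨mul_nonneg hnonneg (sub_nonneg.2 hab), mul_le_of_le_one_left (sub_nonneg.2 hab) hle_one⟩

lemma level_sub_level_eq_sub (hf : Differentiable ℝ f)
    (hγ : IsIntegralCurveOn γ (fun _ ↦ normalizedGradient f) (Icc a b)) (hab : a ≤ b)
    (hreg : ∀ τ ∈ Icc a b, ∇ f (γ τ) ≠ 0) : f (γ b) - f (γ a) = b - a := by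
  obtain ⟨τ, hτ, hsub⟩ := exists_sub_eq_inner_gradient_mul hf hγ hab
  rw [hsub, inner_gradient_normalizedGradient (hreg τ hτ), one_mul]

lemma level_mem_Icc_of_level_eq (hf : Differentiable ℝ f)
    (hγ : IsIntegralCurveOn γ (fun _ ↦ normalizedGradient f) (Icc a b)) (hτ₀ : τ₀ ∈ Icc a b)
    (hlevel : f (γ τ₀) = τ₀ + c) {τ : ℝ} (hτ : τ ∈ Icc a b) :
    f (γ τ) ∈ Icc (a + c) (b + c) := by
  rcases le_total τ₀ τ with h | h
  · have hsub := level_sub_level_mem_Icc hf (hγ.mono (Icc_subset_Icc hτ₀.1 hτ.2)) h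
    constructor <;> linarith [hsub.1, hsub.2, hτ₀.1, hτ.2]
  · have hsub := level_sub_level_mem_Icc hf (hγ.mono (Icc_subset_Icc hτ.1 hτ₀.2)) h
    constructor <;> linarith [hsub.1, hsub.2, hτ.1, hτ₀.2]

lemma level_eq_add (hf : Differentiable ℝ f)
    (hreg : ∀ y, f y ∈ Icc (a + c) (b + c) → ∇ f y ≠ 0)
    (hγ : IsIntegralCurveOn γ (fun _ ↦ normalizedGradient f) (Icc a b)) (hτ₀ : τ₀ ∈ Icc a b)
    (hlevel : f (γ τ₀) = τ₀ + c) {τ : ℝ} (hτ : τ ∈ Icc a b) : f (γ τ) = τ + c := by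
  have hne : ∀ σ ∈ Icc a b, ∇ f (γ σ) ≠ 0 := fun σ hσ ↦
    hreg _ (level_mem_Icc_of_level_eq hf hγ hτ₀ hlevel hσ)
  rcases le_total τ₀ τ with h | h
  · have hI : Icc τ₀ τ ⊆ Icc a b := Icc_subset_Icc hτ₀.1 hτ.2
    linarith [level_sub_level_eq_sub hf (hγ.mono hI) h fun σ hσ ↦ hne σ (hI hσ)]
  · have hI : Icc τ τ₀ ⊆ Icc a b := Icc_subset_Icc hτ.1 hτ₀.2
    linarith [level_sub_level_eq_sub hf (hγ.mono hI) h fun σ hσ ↦ hne σ (hI hσ)]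

lemma eqOn_Icc_of_regular_levels (hf : ContDiff ℝ 2 f)
    (hreg : ∀ y, f y ∈ Icc (a + c) (b + c) → ∇ f y ≠ 0)
    (hα : IsIntegralCurveOn α (fun _ ↦ normalizedGradient f) (Icc a b))
    (hβ : IsIntegralCurveOn β (fun _ ↦ normalizedGradient f) (Icc a b))
    (hτ₀ : τ₀ ∈ Icc a b) (hlevel : f (β τ₀) = τ₀ + c) (heq : α τ₀ = β τ₀) :
    EqOn α β (Icc a b) := by
  have hdf : Differentiable ℝ f := hf.differentiable two_ne_zero
  exact isIntegralCurveOn_eqOn_Icc_of_locallyLipschitzOn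
    (locallyLipschitzOn_normalizedGradient hf)
    hα (fun τ hτ ↦ hreg _ (level_mem_Icc_of_level_eq hdf hα hτ₀ (heq ▸ hlevel) hτ))
    hβ (fun τ hτ ↦ hreg _ (level_mem_Icc_of_level_eq hdf hβ hτ₀ hlevel hτ)) hτ₀ heq

theorem descent_inverts_ascent_general (hf : ContDiff ℝ 2 f) {t s : ℝ} (hts : t ≤ s)
    (hreg : ∀ y, f y ∈ Icc t s → ∇ f y ≠ 0) {ζ ζd : E → ℝ → E}
    (hζ0 : ∀ x, f x = t → ζ x 0 = x)
    (hζ : ∀ x, f x = t →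
      IsIntegralCurveOn (ζ x) (fun _ ↦ normalizedGradient f) (Icc 0 (s - t)))
    (hζd0 : ∀ z, f z = s → ζd z 0 = z)
    (hζd : ∀ z, f z = s →
      IsIntegralCurveOn (ζd z) (fun _ ↦ -normalizedGradient f) (Icc 0 (s - t))) :
    (∀ x, f x = t → f (ζ x (s - t)) = s) ∧
    (∀ z, f z = s → f (ζd z (s - t)) = t) ∧
    (∀ x, f x = t → ζd (ζ x (s - t)) (s - t) = x) ∧
    (∀ z, f z = s → ζ (ζd z (s - t)) (s - t) = z) := by
  have hdf : Differentiable ℝ f := hf.differentiable two_ne_zero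
  have hstart : 0 ∈ Icc 0 (s - t) := left_mem_Icc.2 (sub_nonneg.2 hts)
  have hend : s - t ∈ Icc 0 (s - t) := right_mem_Icc.2 (sub_nonneg.2 hts)
  have hreg' : ∀ y, f y ∈ Icc (0 + t) (s - t + t) → ∇ f y ≠ 0 := by
    simpa only [zero_add, sub_add_cancel] using hreg
  let ξ (z : E) (τ : ℝ) : E := ζd z (s - t - τ)
  have hξ_end (z) (hz : f z = s) : ξ z (s - t) = z := by simp only [ξ, sub_self, hζd0 z hz]
  have hξ_start (z) : ξ z 0 = ζd z (s - t) := by simp only [ξ, sub_zero]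
  have hξ (z) (hz : f z = s) :
      IsIntegralCurveOn (ξ z) (fun _ ↦ normalizedGradient f) (Icc 0 (s - t)) := by
    simpa using isIntegralCurveOn_comp_const_sub (hζd z hz) (s - t)
  have hζ_level (x) (hx : f x = t) : f (ζ x (s - t)) = s - t + t :=
    level_eq_add hdf hreg' (hζ x hx) hstart (by rw [hζ0 x hx, hx, zero_add]) hend
  have hξ_level (z) (hz : f z = s) : f (ξ z 0) = 0 + t :=
    level_eq_add hdf hreg' (hξ z hz) hend (by rw [hξ_end z hz, hz, sub_add_cancel]) hstart
  have hψ (x) (hx : f x = t) : f (ζ x (s - t)) = s := by rw [hζ_level x hx, sub_add_cancel]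
  have hψd (z) (hz : f z = s) : f (ζd z (s - t)) = t := by
    rw [← hξ_start, hξ_level z hz, zero_add]
  refine ⟨hψ, hψd, fun x hx ↦ ?_, fun z hz ↦ ?_⟩
  · have heq : EqOn (ξ (ζ x (s - t))) (ζ x) (Icc 0 (s - t)) :=
      eqOn_Icc_of_regular_levels hf hreg' (hξ _ (hψ x hx)) (hζ x hx) hend
        (hζ_level x hx) (hξ_end _ (hψ x hx))
    rw [← hξ_start, heq hstart, hζ0 x hx]
  · have heq : EqOn (ζ (ζd z (s - t))) (ξ z) (Icc 0 (s - t)) :=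
      eqOn_Icc_of_regular_levels hf hreg' (hζ _ (hψd z hz)) (hξ z hz) hstart
        (hξ_level z hz) ((hζ0 _ (hψd z hz)).trans (hξ_start z).symm)
    rw [heq hend, hξ_end z hz]

end NormalizedGradient

lemma ascentField_eq_normalizedGradient {d : ℕ} (f : EuclideanSpace ℝ (Fin d) → ℝ) :
    ascentField f = normalizedGradient f := by
  ext1 y
  simp +contextual [ascentField, normalizedGradient]

lemma descentField_eq_neg_normalizedGradient {d : ℕ} (f : EuclideanSpace ℝ (Fin d) → ℝ) :
    descentField f = -normalizedGradient f := by
  ext1 y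
  simp +contextual [descentField, normalizedGradient]

/-- If there are no critical points at any level in `[t, s]`, then with
`ψ(x) = ζ_x(s − t)` (ascent flow from `L_t`) and `ψ↓(z) = ζ↓_z(s − t)` (descent flow from
`L_s`), one has `ψ(x) ∈ L_s`, `ψ↓(z) ∈ L_t`, and the descent flow inverts the ascent flow:
`ψ↓(ψ(x)) = x` on `L_t` and `ψ(ψ↓(z)) = z` on `L_s`. -/
theorem descent_inverts_ascent {d : ℕ} (f : EuclideanSpace ℝ (Fin d) → ℝ)
    (hf : ContDiff ℝ 2 f) (hf_nonneg : ∀ x, 0 ≤ f x) (hf_int : ∫ x, f x = 1)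
    (t s : ℝ) (ht : 0 < t) (hts : t < s) (hs_max : ∃ z, s < f z)
    (hreg : ∀ y, f y ∈ Icc t s → gradient f y ≠ 0)
    (ζ : EuclideanSpace ℝ (Fin d) → ℝ → EuclideanSpace ℝ (Fin d))
    (hζ0 : ∀ x, f x = t → ζ x 0 = x)
    (hζ : ∀ x, f x = t → ∀ τ ∈ Icc (0 : ℝ) (s - t),
      HasDerivAt (ζ x) (ascentField f (ζ x τ)) τ)
    (ζd : EuclideanSpace ℝ (Fin d) → ℝ → EuclideanSpace ℝ (Fin d))
    (hζd0 : ∀ z, f z = s → ζd z 0 = z)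
    (hζd : ∀ z, f z = s → ∀ τ ∈ Icc (0 : ℝ) (s - t),
      HasDerivAt (ζd z) (descentField f (ζd z τ)) τ) :
    (∀ x, f x = t → f (ζ x (s - t)) = s) ∧
    (∀ z, f z = s → f (ζd z (s - t)) = t) ∧
    (∀ x, f x = t → ζd (ζ x (s - t)) (s - t) = x) ∧
    (∀ z, f z = s → ζ (ζd z (s - t)) (s - t) = z) := by
  simp only [ascentField_eq_normalizedGradient, descentField_eq_neg_normalizedGradient] at hζ hζd
  exact descent_inverts_ascent_general hf hts.le hreg hζ0
    (fun x hx τ hτ ↦ (hζ x hx τ hτ).hasDerivWithinAt) hζd0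
    (fun z hz τ hτ ↦ (hζd z hz τ hτ).hasDerivWithinAt)
end
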